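/- arXiv:1702.08433 — 8 statements merged into one kernel-verified Lean document; each statement's English description precedes it below -/
import Mathlib

section
/- Let μ and ν be Borel probability measures on ℝ^N with finite first moments (∫‖x‖ dμ(x) < ∞ and ∫‖x‖ dν(x) < ∞) that are in convex order, i.e. ∫φ dμ ≤ ∫φ dν for every convex Lipschitz function φ : ℝ^N → ℝ. Suppose there exists a strictly convex function φ : ℝ^N → ℝ that is integrable with respect to both μ and ν and satisfies ∫φ dμ = ∫φ dν. Then μ = ν. -/
/-!
For a compact set `K`, let `Φ` be the supremum of the supporting affine functions of `φ` at the
points of `K`. It is convex, agrees with `φ` on `K`, and by strict convexity and compactness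
`Φ < φ` off `K`: if `l` supports `φ` at `x`, then evaluating at the midpoint of `x` and `y` gives
`φ y - l y ≥ φ x + φ y - 2 φ ((x + y) / 2)`, which is positive and continuous in `x ∈ K`.

The function `max φ (Φ + ε)` is convex and within `ε` of `φ`. Convex order, together with
`∫ φ dμ = ∫ φ dν`, yields `∫ g dμ ≤ ∫ g dν` for `g = (max φ (Φ + ε) - φ) / ε`. These functions take
values in `[0, 1]` and converge to the indicator of `K` as `ε → 0`, so `μ K ≤ ν K`. Inner regularity
gives `μ ≤ ν`, and both are probability measures.

Convex order is assumed for Lipschitz test functions only; it extends to integrable convex functions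
because these are increasing limits of finite maxima of affine functions
(`integral_le_of_convexOn`).
-/

open MeasureTheory Set Filter Topology

noncomputable section

/-- `E N` is `N`-dimensional Euclidean space. -/
abbrev E (N : ℕ) := EuclideanSpace ℝ (Fin N)

/-- A function is convex and Lipschitz. -/
def IsConvexLipschitz {N : ℕ} (φ : E N → ℝ) : Prop :=
  ConvexOn ℝ Set.univ φ ∧ ∃ K : NNReal, LipschitzWith K φ

/-- A function is affine. -/
def IsAffineFn {N : ℕ} (a : E N → ℝ) : Prop :=
  ∃ f : E N →ᵃ[ℝ] ℝ, a = ⇑f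

/-- `(φ n)_n` is asymptotically affine on `V`: there are affine functions `a n` with
`φ n y - a n y → 0` for every `y ∈ V`. -/
def AsympAffineOn {N : ℕ} (φ : ℕ → E N → ℝ) (V : Set (E N)) : Prop :=
  ∃ a : ℕ → E N → ℝ, (∀ n, IsAffineFn (a n)) ∧
    ∀ y ∈ V, Filter.Tendsto (fun n => φ n y - a n y) Filter.atTop (nhds 0)

/-- A set is relatively open if it equals its relative (intrinsic) interior. -/
def IsRelOpen {N : ℕ} (V : Set (E N)) : Prop :=
  V = intrinsicInterior ℝ V

/-- The asymptotically affine component `A_x((φ^n)_n)`: the relative interior of the convex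
hull of the union of all nonempty, convex, relatively open sets containing `x` on which
`(φ^n)_n` is asymptotically affine. -/
def Acomp {N : ℕ} (φ : ℕ → E N → ℝ) (x : E N) : Set (E N) :=
  intrinsicInterior ℝ (convexHull ℝ
    (⋃₀ {V : Set (E N) | V.Nonempty ∧ Convex ℝ V ∧ IsRelOpen V ∧ x ∈ V ∧ AsympAffineOn φ V}))

/-- The face of `D` containing `x` in its relative interior. -/
def FaceAt {N : ℕ} (D : Set (E N)) (x : E N) : Set (E N) :=
  {y ∈ D | ∃ z ∈ D, ∃ t : ℝ, t ∈ Set.Ioo (0:ℝ) 1 ∧ x = t • y + (1 - t) • z}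

/-- `E_x`: intersection over `k` of the closures of `A_x((φ^{k,n})_n)`. -/
def Ecomp {N : ℕ} (φ : ℕ → ℕ → E N → ℝ) (x : E N) : Set (E N) :=
  ⋂ k : ℕ, closure (Acomp (φ k) x)

/-- The convex component `C_x`: the relative interior of the face of `E_x` containing `x`. -/
def Ccomp {N : ℕ} (φ : ℕ → ℕ → E N → ℝ) (x : E N) : Set (E N) :=
  intrinsicInterior ℝ (FaceAt (Ecomp φ x) x)

/-- Convex order, tested on Lipschitz functions, extends to all integrable convex functions. -/
theorem integral_le_of_convexOn {N : ℕ} {μ ν : Measure (E N)}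
    [IsProbabilityMeasure μ] [IsProbabilityMeasure ν]
    (hμmom : Integrable (fun x => ‖x‖) μ) (hνmom : Integrable (fun x => ‖x‖) ν)
    (horder : ∀ φ : E N → ℝ, IsConvexLipschitz φ → ∫ x, φ x ∂μ ≤ ∫ x, φ x ∂ν)
    {ψ : E N → ℝ} (hψ : ConvexOn ℝ univ ψ) (hψμ : Integrable ψ μ) (hψν : Integrable ψ ν) :
    ∫ x, ψ x ∂μ ≤ ∫ x, ψ x ∂ν := by
  obtain ⟨l, c, hle, hsup⟩ :=
    hψ.real_univ_sSup_of_nat_affine_eq hψ.locallyLipschitz.continuous.lowerSemicontinuous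
  set a : ℕ → E N → ℝ := fun i => ⇑(l i) + Function.const (E N) (c i) with ha
  have hacl : ∀ i, IsConvexLipschitz (a i) := fun i =>
    ⟨((l i).toLinearMap.convexOn convex_univ).add_const (c i), ‖l i‖₊ + 0,
      (l i).lipschitz.add (LipschitzWith.const (c i))⟩
  have hFcl : ∀ n, IsConvexLipschitz (partialSups a n) := by
    intro n
    induction n with
    | zero => simpa using hacl 0
    | succ n ih =>
      obtain ⟨h1, K, hK⟩ := ih
      obtain ⟨h2, K', hK'⟩ := hacl (n + 1)
      rw [partialSups_add_one]
      exact ⟨h1.sup h2, max K K', hK.max hK'⟩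
  have hFle : ∀ n, partialSups a n ≤ ψ := fun n => partialSups_le _ _ _ fun j _ => hle j
  have hFge : ∀ n, a 0 ≤ partialSups a n := fun n => le_partialSups_of_le a (Nat.zero_le n)
  have hlim : ∀ x, Tendsto (fun n => partialSups a n x) atTop (𝓝 (ψ x)) := by
    intro x
    have hb : BddAbove (range fun n => a n x) := ⟨ψ x, by rintro _ ⟨n, rfl⟩; exact hle n x⟩
    have h : ⨆ n, partialSups (fun n => a n x) n = ψ x := by
      rw [ciSup_partialSups_eq hb, ← congrFun hsup x, iSup_apply]
    simp_rw [Pi.partialSups_apply]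
    rw [← h]
    exact tendsto_atTop_ciSup (partialSups_monotone _) (bddAbove_range_partialSups.2 hb)
  have key : ∀ ρ : Measure (E N), IsProbabilityMeasure ρ → Integrable (fun x => ‖x‖) ρ →
      Integrable ψ ρ →
      Tendsto (fun n => ∫ x, partialSups a n x ∂ρ) atTop (𝓝 (∫ x, ψ x ∂ρ)) := by
    intro ρ _ hmom hψρ
    have hid : Integrable (fun x : E N => x) ρ :=
      (integrable_norm_iff aestronglyMeasurable_id).1 hmom
    have ha0 : Integrable (a 0) ρ := ((l 0).integrable_comp hid).add (integrable_const (c 0))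
    refine tendsto_integral_of_dominated_convergence (fun x => |a 0 x| + |ψ x|)
      (fun n => ?_) (ha0.abs.add hψρ.abs) (fun n => ?_) (ae_of_all _ hlim)
    · obtain ⟨-, K, hK⟩ := hFcl n
      exact hK.continuous.aestronglyMeasurable
    · refine ae_of_all _ fun x => ?_
      have h1 := hFge n x
      have h2 := hFle n x
      rw [Real.norm_eq_abs, abs_le]
      constructor <;> linarith [neg_abs_le (a 0 x), le_abs_self (ψ x), abs_nonneg (a 0 x),
        abs_nonneg (ψ x)]
  exact le_of_tendsto_of_tendsto' (key μ inferInstance hμmom hψμ) (key ν inferInstance hνmom hψν)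
    fun n => horder _ (hFcl n)

/-- A finite convex function on `ℝ^N` has a subgradient at every point. -/
theorem exists_subgradient {N : ℕ} {φ : E N → ℝ} (hφ : ConvexOn ℝ univ φ) (x : E N) :
    ∃ l : E N →L[ℝ] ℝ, ∀ y, φ x + l (y - x) ≤ φ y := by
  have hc : Continuous φ := hφ.locallyLipschitz.continuous
  have hconv : Convex ℝ {p : E N × ℝ | φ p.1 < p.2} := by
    simpa using hφ.convex_strict_epigraph
  have hopen : IsOpen {p : E N × ℝ | φ p.1 < p.2} :=
    isOpen_lt (hc.comp continuous_fst) continuous_snd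
  obtain ⟨f, hf⟩ := geometric_hahn_banach_open_point hconv hopen
    (x := (x, φ x)) (by simp)
  set b : ℝ := f (0, 1) with hb
  set u : E N →L[ℝ] ℝ := f.comp (.inl ℝ (E N) ℝ) with hu
  have hsplit : ∀ y t, f (y, t) = u y + t * b := by
    intro y t
    have : ((y, t) : E N × ℝ) = (y, 0) + t • ((0 : E N), (1 : ℝ)) := by simp
    rw [this, map_add, map_smul]
    simp [hu, hb]
  have hlt : ∀ y t, φ y < t → u y + t * b < u x + φ x * b := by
    intro y t h
    simpa [hsplit] using hf (y, t) h
  have hbneg : b < 0 := by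
    have := hlt x (φ x + 1) (by linarith)
    linarith
  -- Letting `t` decrease to `φ y` passes from the strict epigraph to the graph.
  have hle : ∀ y, u y + φ y * b ≤ u x + φ x * b := by
    intro y
    refine le_of_forall_pos_le_add fun ε hε => ?_
    have h := hlt y (φ y + ε / (-b)) (by have := div_pos hε (neg_pos.2 hbneg); linarith)
    have h2 : ε / (-b) * b = -ε := by rw [div_neg, neg_mul, div_mul_cancel₀ _ hbneg.ne]
    rw [add_mul, h2] at h
    linarith
  refine ⟨(-b)⁻¹ • u, fun y => ?_⟩
  have h := hle y
  have h3 : (-b)⁻¹ * (u y - u x) ≤ φ y - φ x := by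
    rw [inv_mul_le_iff₀ (neg_pos.2 hbneg)]
    linarith
  simp only [_root_.smul_apply, map_sub, smul_eq_mul]
  linarith

/-- The upper envelope `Φ` of the supporting affine functions of `φ` at the points of a compact set
`K` touches `φ` exactly on `K`. -/
theorem exists_convex_touching {N : ℕ} {φ : E N → ℝ} (hφ : StrictConvexOn ℝ univ φ)
    {K : Set (E N)} (hK : IsCompact K) (hne : K.Nonempty) :
    ∃ Φ : E N → ℝ, ConvexOn ℝ univ Φ ∧ (∀ y, Φ y ≤ φ y) ∧ (∀ y ∈ K, Φ y = φ y) ∧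
      ∀ y ∉ K, Φ y < φ y := by
  have hc : Continuous φ := hφ.convexOn.locallyLipschitz.continuous
  choose l hl using exists_subgradient hφ.convexOn
  have : Nonempty K := hne.to_subtype
  have hbdd : ∀ y, BddAbove (range fun x : K => φ x + l x (y - x)) := fun y =>
    ⟨φ y, by rintro _ ⟨x, rfl⟩; exact hl x y⟩
  have hle : ∀ y, (⨆ x : K, φ x + l x (y - x)) ≤ φ y := fun y => ciSup_le fun x => hl x y
  refine ⟨fun y => ⨆ x : K, φ x + l x (y - x), ⟨convex_univ, ?_⟩, hle, ?_, ?_⟩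
  · intro y _ z _ s t hs ht hst
    refine ciSup_le fun x => ?_
    have h1 := mul_le_mul_of_nonneg_left (le_ciSup (hbdd y) x) hs
    have h2 := mul_le_mul_of_nonneg_left (le_ciSup (hbdd z) x) ht
    simp only [map_sub, map_add, map_smul, smul_eq_mul] at h1 h2 ⊢
    have h3 : φ x + (s * l x y + t * l x z - l x x) =
        s * (φ x + (l x y - l x x)) + t * (φ x + (l x z - l x x)) := by
      linear_combination (-(φ x - l x x)) * hst
    linarith
  · intro y hy
    refine le_antisymm (hle y) ?_
    have := le_ciSup (hbdd y) ⟨y, hy⟩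
    simpa using this
  · intro y hy
    obtain ⟨x₀, hx₀, hmin⟩ := hK.exists_isMinOn hne
      (f := fun x => φ x + φ y - 2 * φ ((1 / 2 : ℝ) • x + (1 / 2 : ℝ) • y)) (by fun_prop)
    have hpos : 0 < φ x₀ + φ y - 2 * φ ((1 / 2 : ℝ) • x₀ + (1 / 2 : ℝ) • y) := by
      have hxy : x₀ ≠ y := fun h => hy (h ▸ hx₀)
      have := hφ.2 (mem_univ x₀) (mem_univ y) hxy (one_half_pos (α := ℝ))
        one_half_pos (by norm_num)
      simp only [smul_eq_mul] at this
      linarith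
    refine lt_of_le_of_lt (ciSup_le fun x => ?_) (sub_lt_self (φ y) hpos)
    have h1 := hmin x.2
    simp only [mem_ofPred_eq] at h1
    have h2 := hl x ((1 / 2 : ℝ) • (x : E N) + (1 / 2 : ℝ) • y)
    simp only [map_sub, map_add, map_smul, smul_eq_mul] at h2 ⊢
    linarith

/-- If `μ ⪯_c ν` and `∫ φ dμ = ∫ φ dν < ∞` for a strictly convex `φ : ℝ^N → ℝ`, then `ν = μ`. -/
theorem stmt0 {N : ℕ} (μ ν : Measure (E N))
    [IsProbabilityMeasure μ] [IsProbabilityMeasure ν]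
    (hμmom : Integrable (fun x => ‖x‖) μ) (hνmom : Integrable (fun x => ‖x‖) ν)
    (horder : ∀ φ : E N → ℝ, IsConvexLipschitz φ → ∫ x, φ x ∂μ ≤ ∫ x, φ x ∂ν)
    (φ : E N → ℝ) (hφ : StrictConvexOn ℝ Set.univ φ)
    (hφμ : Integrable φ μ) (hφν : Integrable φ ν)
    (heq : ∫ x, φ x ∂μ = ∫ x, φ x ∂ν) :
    μ = ν := by
  have hcompact : ∀ K : Set (E N), IsCompact K → μ K ≤ ν K := by
    intro K hK
    rcases K.eq_empty_or_nonempty with rfl | hne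
    · simp
    obtain ⟨Φ, hΦ, hle, hon, hoff⟩ := exists_convex_touching hφ hK hne
    have hφc : Continuous φ := hφ.convexOn.locallyLipschitz.continuous
    have hΦc : Continuous Φ := hΦ.locallyLipschitz.continuous
    set ε : ℕ → ℝ := fun n => 1 / ((n : ℝ) + 1) with hε
    have hεpos : ∀ n, 0 < ε n := fun n => by positivity
    set ψ : ℕ → E N → ℝ := fun n => φ ⊔ (fun y => Φ y + ε n) with hψ
    have hψconv : ∀ n, ConvexOn ℝ univ (ψ n) := fun n => hφ.convexOn.sup (hΦ.add_const (ε n))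
    have hψc : ∀ n, Continuous (ψ n) := fun n => (hψconv n).locallyLipschitz.continuous
    have hge : ∀ n y, 0 ≤ ψ n y - φ y := fun n y =>
      sub_nonneg.2 (le_max_left (φ y) (Φ y + ε n))
    have hub : ∀ n y, ψ n y - φ y ≤ ε n := fun n y => by
      have : ψ n y ≤ φ y + ε n :=
        max_le (by linarith [hεpos n]) (by linarith [hle y])
      linarith
    have hdiff : ∀ n (ρ : Measure (E N)), IsProbabilityMeasure ρ →
        Integrable (fun y => ψ n y - φ y) ρ := fun n ρ _ =>
      Integrable.of_bound ((hψc n).sub hφc).aestronglyMeasurable (ε n)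
        (ae_of_all _ fun y => by rw [Real.norm_eq_abs, abs_of_nonneg (hge n y)]; exact hub n y)
    have hψint : ∀ n (ρ : Measure (E N)), IsProbabilityMeasure ρ → Integrable φ ρ →
        Integrable (ψ n) ρ := fun n ρ hρ hi =>
      ((hdiff n ρ hρ).add hi).congr (ae_of_all _ fun y => by simp)
    set g : ℕ → E N → ℝ := fun n y => (ψ n y - φ y) / ε n with hg
    have hgle : ∀ n, ∫ y, g n y ∂μ ≤ ∫ y, g n y ∂ν := by
      intro n
      have h1 := integral_le_of_convexOn hμmom hνmom horder (hψconv n)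
        (hψint n μ inferInstance hφμ) (hψint n ν inferInstance hφν)
      simp only [hg, integral_div]
      rw [integral_sub (hψint n μ inferInstance hφμ) hφμ,
        integral_sub (hψint n ν inferInstance hφν) hφν]
      exact div_le_div_of_nonneg_right (by linarith) (hεpos n).le
    have hlim : ∀ y, Tendsto (fun n => g n y) atTop (𝓝 (K.indicator (fun _ => (1 : ℝ)) y)) := by
      intro y
      by_cases hy : y ∈ K
      · rw [indicator_of_mem hy]
        refine tendsto_const_nhds.congr fun n => ?_
        have : ψ n y = φ y + ε n := by
          simp only [hψ, Pi.sup_apply, hon y hy]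
          exact max_eq_right (by linarith [hεpos n])
        simp only [hg, this, add_sub_cancel_left]
        exact (div_self (hεpos n).ne').symm
      · rw [indicator_of_notMem hy]
        -- Once `ε n` is below the gap `φ y - Φ y`, the maximum defining `ψ n y` is `φ y`.
        have hev : ∀ᶠ n in atTop, ε n < φ y - Φ y :=
          (tendsto_order.1 tendsto_one_div_add_atTop_nhds_zero_nat).2 _
            (sub_pos.2 (hoff y hy))
        refine tendsto_const_nhds.congr' ?_
        filter_upwards [hev] with n hn
        have : ψ n y = φ y := max_eq_left (by linarith)
        simp [hg, this]
    have key : ∀ ρ : Measure (E N), IsProbabilityMeasure ρ →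
        Tendsto (fun n => ∫ y, g n y ∂ρ) atTop (𝓝 (ρ.real K)) := by
      intro ρ _
      have h := tendsto_integral_of_dominated_convergence (μ := ρ) (F := g) (fun _ => (1 : ℝ))
        (fun n => (((hψc n).sub hφc).div_const (ε n)).aestronglyMeasurable) (integrable_const _)
        (fun n => ae_of_all _ fun y => by
          rw [Real.norm_eq_abs, abs_of_nonneg (div_nonneg (hge n y) (hεpos n).le)]
          exact (div_le_one (hεpos n)).2 (hub n y))
        (ae_of_all _ hlim)
      rwa [integral_indicator_const _ hK.measurableSet, smul_eq_mul, mul_one] at h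
    have hreal : μ.real K ≤ ν.real K :=
      le_of_tendsto_of_tendsto' (key μ inferInstance) (key ν inferInstance) hgle
    exact (ENNReal.toReal_le_toReal (measure_ne_top μ K) (measure_ne_top ν K)).1 hreal
  refine Measure.eq_of_le_of_isProbabilityMeasure (Measure.le_iff.2 fun A hA => ?_)
  rw [hA.measure_eq_iSup_isCompact_of_ne_top (measure_ne_top μ A)]
  exact iSup_le fun K => iSup_le fun hKA => iSup_le fun hK =>
    (hcompact K hK).trans (measure_mono hKA)
end
end

section
/- Let α be a Borel probability measure on ℝ^N with finite first moment that is concentrated on a convex set D ⊆ ℝ^N (i.e. there exists a Borel set S ⊆ D with α(S) = 1), and let b := ∫ y α(dy) denote its barycenter (which belongs to D). Define F_b := {y ∈ D : ∃ z ∈ D and t ∈ (0,1) with b = t·y + (1−t)·z}. Then α is concentrated on F_b, i.e. there exists a Borel set S' ⊆ F_b with α(S') = 1. -/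
/-!
Among the linear subspaces `W` with `y - b ∈ W` for almost every `y` (where `b` is the barycenter),
choose a minimal one. Let `T` be the trace on `W` of the translate of the carrier `S` by `-b`.
If `0` were not interior (in `W`) to the convex hull of `T`, a nonzero functional `f` on `W` would be
nonnegative on `T` (`exists_nonneg_functional`). Its integral against the centred measure is zero,
so it vanishes almost everywhere, and `W ∩ ker f` would contradict minimality. Hence `0` is
interior to the hull of `T`, and every segment from a point `y ∈ S ∩ (b + W)` to `b` can be
prolonged beyond `b` inside `D`, which says that `y` lies in the face at `b`.
-/

open MeasureTheory Set Filter Topology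

noncomputable section

/-- Weak supporting hyperplane theorem in finite dimension, without any assumption that the convex
set has interior: a flat set lies in a level set of a nonzero functional. -/
theorem exists_nonneg_functional {W : Type*} [NormedAddCommGroup W] [NormedSpace ℝ W]
    [FiniteDimensional ℝ W] (T : Set W) (hT : T.Nonempty)
    (h0 : (0 : W) ∉ interior (convexHull ℝ T)) :
    ∃ f : W →ₗ[ℝ] ℝ, f ≠ 0 ∧ ∀ x ∈ T, 0 ≤ f x := by
  by_cases hne : (interior (convexHull ℝ T)).Nonempty
  · have hc : Convex ℝ (convexHull ℝ T) := convex_convexHull ℝ T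
    obtain ⟨f, hf⟩ := geometric_hahn_banach_open_point hc.interior isOpen_interior h0
    refine ⟨-(f : W →ₗ[ℝ] ℝ), ?_, ?_⟩
    · intro h
      obtain ⟨a, ha⟩ := hne
      have h1 := hf a ha
      have h2 := LinearMap.congr_fun h a
      simp at h1 h2
      linarith
    · intro x hx
      have hx' : x ∈ closure (interior (convexHull ℝ T)) := by
        rw [hc.closure_interior_eq_closure_of_nonempty_interior hne]
        exact subset_closure (subset_convexHull ℝ T hx)
      have hcl : closure (interior (convexHull ℝ T)) ⊆ {z | f z ≤ 0} := by
        refine closure_minimal (fun a ha => ?_) (isClosed_le f.continuous continuous_const)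
        have := hf a ha
        simp at this
        exact this.le
      have : f x ≤ 0 := hcl hx'
      simpa using this
  · rw [interior_convexHull_nonempty_iff_affineSpan_eq_top] at hne
    obtain ⟨p, hp⟩ := hT
    have hlt : (affineSpan ℝ T).direction < ⊤ := by
      rw [lt_top_iff_ne_top]
      intro h
      exact hne ((AffineSubspace.direction_eq_top_iff_of_nonempty
        ⟨p, subset_affineSpan ℝ T hp⟩).1 h)
    obtain ⟨f, hf0, hf⟩ := Submodule.exists_le_ker_of_lt_top _ hlt
    have hconst : ∀ x ∈ T, f x = f p := by
      intro x hx
      have := hf (AffineSubspace.vsub_mem_direction (subset_affineSpan ℝ T hx)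
        (subset_affineSpan ℝ T hp))
      simpa [sub_eq_zero] using this
    rcases le_total 0 (f p) with h | h
    · exact ⟨f, hf0, fun x hx => (hconst x hx).symm ▸ h⟩
    · refine ⟨-f, neg_ne_zero.2 hf0, fun x hx => ?_⟩
      simpa [hconst x hx] using h

/-- A probability measure with finite first moment concentrated on a convex set `D` is in fact
concentrated on the face of `D` containing its barycenter in its relative interior. -/
theorem stmt2 {N : ℕ} (α : Measure (E N)) [IsProbabilityMeasure α]
    (hmom : Integrable (fun y => ‖y‖) α)
    (D : Set (E N)) (hD : Convex ℝ D)
    (hconc : ∃ S : Set (E N), MeasurableSet S ∧ S ⊆ D ∧ α S = 1) :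
    ∃ S' : Set (E N), MeasurableSet S' ∧ S' ⊆ FaceAt D (∫ y, y ∂α) ∧ α S' = 1 := by
  obtain ⟨S, hSm, hSD, hS1⟩ := hconc
  have hint : Integrable (fun y : E N => y) α :=
    (integrable_norm_iff aestronglyMeasurable_id).1 hmom
  set b : E N := ∫ y, y ∂α with hb
  have hSae : ∀ᵐ y ∂α, y ∈ S := (mem_ae_iff_prob_eq_one hSm).2 hS1
  obtain ⟨W, hW, hmin⟩ := wellFounded_lt.has_min
    {W : Submodule ℝ (E N) | ∀ᵐ y ∂α, y - b ∈ W} ⟨⊤, by simp⟩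
  simp only [Set.mem_ofPred_eq] at hW hmin
  set T : Set W := {w | b + (w : E N) ∈ S} with hT
  have hTne : T.Nonempty := by
    obtain ⟨y, hy, hyS⟩ := (hW.and hSae).exists
    exact ⟨⟨y - b, hy⟩, by simpa [hT] using hyS⟩
  have h0 : (0 : W) ∈ interior (convexHull ℝ T) := by
    by_contra hcon
    obtain ⟨f, hf0, hf⟩ := exists_nonneg_functional T hTne hcon
    obtain ⟨g, hg⟩ := LinearMap.exists_extend f
    have hgf : ∀ w : W, g w = f w := fun w => LinearMap.congr_fun hg w
    let G : E N →L[ℝ] ℝ := LinearMap.toContinuousLinearMap g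
    have hcen : Integrable (fun y => y - b) α := hint.sub (integrable_const b)
    have hGint : ∫ y, G (y - b) ∂α = 0 := by
      rw [G.integral_comp_comm hcen, integral_sub hint (integrable_const b)]
      simp [← hb]
    have hpos : 0 ≤ᵐ[α] fun y => G (y - b) := by
      filter_upwards [hW, hSae] with y hy hyS
      have h1 := hf ⟨y - b, hy⟩ (by simpa [hT] using hyS)
      rw [← hgf] at h1
      exact h1
    have hzero := (integral_eq_zero_iff_of_nonneg_ae hpos (G.integrable_comp hcen)).1 hGint
    refine hmin (W ⊓ LinearMap.ker g) ?_ ?_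
    · filter_upwards [hW, hzero] with y hy hy0
      exact ⟨hy, hy0⟩
    · refine lt_of_le_of_ne inf_le_left fun h => hf0 ?_
      ext w
      have hw : (w : E N) ∈ W ⊓ LinearMap.ker g := h.symm ▸ w.2
      rw [← hgf]
      exact hw.2
  have hKD : ∀ w ∈ convexHull ℝ T, b + (w : E N) ∈ D := by
    have hconv : Convex ℝ {w : W | b + (w : E N) ∈ D} :=
      (hD.translate_preimage_right b).linear_preimage W.subtype
    have hTD : T ⊆ {w : W | b + (w : E N) ∈ D} := fun w hw => hSD hw
    exact fun w hw => convexHull_min hTD hconv hw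
  have hWm : MeasurableSet {y : E N | y - b ∈ W} :=
    (W.closed_of_finiteDimensional.preimage (continuous_id.sub continuous_const)).measurableSet
  refine ⟨S ∩ {y | y - b ∈ W}, hSm.inter hWm, ?_,
    (mem_ae_iff_prob_eq_one (hSm.inter hWm)).1 (hSae.and hW)⟩
  rintro y ⟨hyS, hyW⟩
  have hlim : Tendsto (fun ε : ℝ => -ε • (⟨y - b, hyW⟩ : W)) (𝓝[>] 0) (𝓝 0) := by
    have : Continuous (fun ε : ℝ => -ε • (⟨y - b, hyW⟩ : W)) := by fun_prop
    have := this.tendsto 0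
    simp only [neg_zero, zero_smul] at this
    exact this.mono_left nhdsWithin_le_nhds
  obtain ⟨ε, hεK, hε⟩ := ((hlim.eventually (isOpen_interior.mem_nhds h0)).and
    self_mem_nhdsWithin).exists
  have hε : 0 < ε := hε
  refine ⟨hSD hyS, _, hKD _ (interior_subset hεK), ε / (1 + ε),
    ⟨by positivity, by rw [div_lt_one] <;> linarith⟩, ?_⟩
  -- the weight `ε / (1 + ε)` makes `b` the convex combination of `y` and `b - ε • (y - b)`
  ext i
  simp
  field_simp
  ring
end
end

section
/- Let (φ^n)_{n∈ℕ} be a sequence of convex Lipschitz functions φ^n : ℝ^N → ℝ, let V be a nonempty, convex, relatively open subset of ℝ^N, let p ∈ V, and for each n let b_n : ℝ^N → ℝ be an affine function with b_n ≤ φ^n everywhere and b_n(p) = φ^n(p). Then φ^n(y) − b_n(y) → 0 for every y ∈ V if and only if (φ^n)_n is asymptotically affine on V. -/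
/-!
Write `g n = φ n - b n`, so that `g n ≥ 0` and `g n p = 0`. Given `y ∈ V`, relative openness lets
the segment from `y` to `p` be prolonged slightly beyond `p` inside `V`, to a point `z` with
`z + ε y = (1 + ε) p` and `ε > 0` (`IsRelOpen.exists_prolongation`). The combination
`f z + ε f y - (1 + ε) f p` vanishes on affine functions, so it takes the same value on `g n` and on
`φ n - a n` for any affine `a n`. On `g n` it equals `g n z + ε g n y ≥ ε g n y`, while on
`φ n - a n` it tends to `0` whenever `φ n - a n → 0` pointwise on `V`. Hence `g n y → 0`.
-/

open MeasureTheory Set Filter Topology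

noncomputable section

/-- A segment ending at a point `p` of a relatively open set can be prolonged beyond `p`
within the set. -/
theorem IsRelOpen.exists_prolongation {N : ℕ} {V : Set (E N)} (hV : IsRelOpen V) {p y : E N}
    (hp : p ∈ V) (hy : y ∈ V) : ∃ ε : ℝ, 0 < ε ∧ AffineMap.lineMap p y (-ε) ∈ V := by
  have hmem := hp
  rw [hV, mem_intrinsicInterior] at hmem
  obtain ⟨q, hq, hqp⟩ := hmem
  -- The line through `p` and `y`, as a curve in the affine hull of `V`.
  let c : ℝ → affineSpan ℝ V := fun t =>
    ⟨AffineMap.lineMap p y t,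
      AffineMap.lineMap_mem t (subset_affineSpan ℝ V hp) (subset_affineSpan ℝ V hy)⟩
  have hc : Continuous c :=
    Continuous.subtype_mk AffineMap.lineMap_continuous _
  have hc0 : c 0 = q := Subtype.ext (by simp [c, hqp])
  have hnhds : ∀ᶠ t in 𝓝 (0 : ℝ), AffineMap.lineMap p y t ∈ V := by
    have h := hc.continuousAt.preimage_mem_nhds (x := 0)
      (by rw [hc0]; exact mem_interior_iff_mem_nhds.mp hq)
    exact h
  obtain ⟨δ, hδ, hball⟩ := Metric.eventually_nhds_iff.mp hnhds
  refine ⟨δ / 2, half_pos hδ, hball ?_⟩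
  rw [Real.dist_eq, sub_zero, abs_neg, abs_of_pos (half_pos hδ)]
  exact half_lt_self hδ

/-- The second-difference combination at `p - ε (y - p)`, `y` and `p` annihilates affine
functions. -/
theorem IsAffineFn.lineMap_neg {N : ℕ} {a : E N → ℝ} (ha : IsAffineFn a) (p y : E N) (ε : ℝ) :
    a (AffineMap.lineMap p y (-ε)) + ε * a y = (1 + ε) * a p := by
  obtain ⟨f, rfl⟩ := ha
  rw [AffineMap.apply_lineMap, AffineMap.lineMap_apply_ring']
  ring

/-- It suffices to test asymptotic affineness with affine functions supporting `φ n` at a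
fixed point `p` of a nonempty, convex, relatively open set `V`. -/
theorem stmt3 {N : ℕ} (φ : ℕ → E N → ℝ) (hφ : ∀ n, IsConvexLipschitz (φ n))
    (V : Set (E N)) (hVne : V.Nonempty) (hVconv : Convex ℝ V) (hVopen : IsRelOpen V)
    (p : E N) (hp : p ∈ V)
    (b : ℕ → E N → ℝ) (hb : ∀ n, IsAffineFn (b n))
    (hble : ∀ n x, b n x ≤ φ n x) (hbp : ∀ n, b n p = φ n p) :
    (∀ y ∈ V, Tendsto (fun n => φ n y - b n y) atTop (nhds 0)) ↔ AsympAffineOn φ V := by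
  refine ⟨fun h => ⟨b, hb, h⟩, ?_⟩
  rintro ⟨a, ha, hlim⟩ y hy
  obtain ⟨ε, hε, hz⟩ := hVopen.exists_prolongation hp hy
  set z : E N := AffineMap.lineMap p y (-ε)
  have hupper : Tendsto (fun n => ((φ n z - a n z) + ε * (φ n y - a n y)
      - (1 + ε) * (φ n p - a n p)) / ε) atTop (nhds 0) := by
    simpa using ((((hlim z hz).add ((hlim y hy).const_mul ε)).sub
      ((hlim p hp).const_mul (1 + ε))).div_const ε)
  refine squeeze_zero (fun n => sub_nonneg.mpr (hble n y)) (fun n => ?_) hupper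
  rw [le_div_iff₀ hε]
  have h1 := (ha n).lineMap_neg p y ε
  have h2 := (hb n).lineMap_neg p y ε
  rw [hbp n] at h2
  linarith [hble n z]
end
end

section
/- Let (φ^n)_{n∈ℕ} be a sequence of convex Lipschitz functions φ^n : ℝ^N → ℝ, and let (V_i)_{i∈I} be a family of nonempty, convex, relatively open subsets of ℝ^N such that (φ^n)_n is asymptotically affine on each V_i and ⋂_{i∈I} V_i ≠ ∅. Then (φ^n)_n is asymptotically affine on the convex hull of ⋃_{i∈I} V_i. -/
/-!
Fix `x₀ ∈ ⋂ i, V i`. Each `φ n` is the supremum of its affine minorants, so there is an affine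
`f n ≤ φ n` with `f n x₀ = φ n x₀ - 1 / (n + 1)`. The claim is that these `f n` work on the whole
convex hull.

On `V i`: since `V i` is relatively open, every `y ∈ V i` has an opposite point `z ∈ V i`, with `x₀`
strictly between `y` and `z`, say `z = x₀ - s (y - x₀)` with `s > 0`. The quantity
`s (φ n - f n)(y) + (φ n - f n)(z) - (1 + s) (φ n - f n)(x₀)` does not change if `f n` is replaced by the affine function approximating
`φ n` on `V i`, so it tends to `0`. Since `φ n - f n ≥ 0` and `(φ n - f n)(x₀) → 0`, this forces
`(φ n - f n)(y) → 0` (`tendsto_of_opposite`).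

On the convex hull: the set where the nonnegative convex functions `φ n - f n` tend to `0` is convex
(`convex_tendsto_zero`) and contains every `V i`.
-/

open MeasureTheory Set Filter Topology

noncomputable section

/-- An affine minorant that lies exactly `ε` below `g` at a prescribed point. -/
lemma exists_affine_minorant {N : ℕ} {g : E N → ℝ} (hg : IsConvexLipschitz g) (x : E N)
    {ε : ℝ} (hε : 0 < ε) : ∃ f : E N →ᵃ[ℝ] ℝ, (∀ y, f y ≤ g y) ∧ f x = g x - ε := by
  obtain ⟨hc, K, hK⟩ := hg
  obtain ⟨l, c, hle, heq⟩ := ConvexOn.exists_affine_le_of_lt (𝕜 := ℝ) (mem_univ x)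
    (sub_lt_self (g x) hε) isClosed_univ (hK.continuous.lowerSemicontinuous.lowerSemicontinuousOn _)
    hc
  refine ⟨(l : E N →ₗ[ℝ] ℝ).toAffineMap + AffineMap.const ℝ (E N) c, fun y => ?_, ?_⟩
  · simpa using hle ⟨y, mem_univ y⟩
  · simpa using heq

/-- In a relatively open set, the segment from `y` to `x` can be prolonged a little beyond `x`. -/
lemma IsRelOpen.exists_opposite {N : ℕ} {V : Set (E N)} (hV : IsRelOpen V) {x y : E N}
    (hx : x ∈ V) (hy : y ∈ V) : ∃ s : ℝ, 0 < s ∧ AffineMap.lineMap x y (-s) ∈ V := by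
  rw [hV, mem_intrinsicInterior] at hx
  obtain ⟨p, hp, rfl⟩ := hx
  have hmem (t : ℝ) : AffineMap.lineMap (p : E N) y t ∈ affineSpan ℝ V :=
    AffineMap.lineMap_mem t p.2 (subset_affineSpan ℝ V hy)
  let c : ℝ → affineSpan ℝ V := fun t => ⟨AffineMap.lineMap (p : E N) y (-t), hmem (-t)⟩
  have hc : Continuous c := by
    refine Continuous.subtype_mk ?_ _
    exact AffineMap.lineMap_continuous.comp continuous_neg
  have hc0 : c 0 = p := by ext1; simp [c]
  have hev : ∀ᶠ t in 𝓝 (0 : ℝ), c t ∈ interior ((↑) ⁻¹' V : Set (affineSpan ℝ V)) :=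
    hc.continuousAt.eventually_mem (by rw [hc0]; exact isOpen_interior.mem_nhds hp)
  have hev' : ∀ᶠ t in 𝓝[>] (0 : ℝ), c t ∈ interior ((↑) ⁻¹' V : Set (affineSpan ℝ V)) :=
    hev.filter_mono nhdsWithin_le_nhds
  obtain ⟨s, hs, hs0⟩ := (hev'.and self_mem_nhdsWithin).exists
  exact ⟨s, hs0, (interior_subset hs : c s ∈ _)⟩

/-- If `φ n` is asymptotic to affine `b n` at `x`, at `y` and at the point `lineMap x y (-s)` on the
other side of `x` from `y`, then affine minorants `f n` asymptotic to `φ n` at `x` are also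
asymptotic to `φ n` at `y`. -/
lemma tendsto_of_opposite {N : ℕ} {φ : ℕ → E N → ℝ} {f b : ℕ → E N →ᵃ[ℝ] ℝ}
    (hf : ∀ n y, f n y ≤ φ n y) {x y : E N} {s : ℝ} (hs : 0 < s)
    (hfx : Tendsto (fun n => φ n x - f n x) atTop (𝓝 0))
    (hbx : Tendsto (fun n => φ n x - b n x) atTop (𝓝 0))
    (hby : Tendsto (fun n => φ n y - b n y) atTop (𝓝 0))
    (hbz : Tendsto (fun n => φ n (AffineMap.lineMap x y (-s)) - b n (AffineMap.lineMap x y (-s)))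
      atTop (𝓝 0)) :
    Tendsto (fun n => φ n y - f n y) atTop (𝓝 0) := by
  have hlim := ((((hby.const_mul s).add hbz).sub (hbx.const_mul (1 + s))).add
    (hfx.const_mul (1 + s))).const_mul s⁻¹
  simp only [mul_zero, add_zero, sub_zero] at hlim
  refine squeeze_zero (fun n => sub_nonneg.2 (hf n y)) (fun n => ?_) hlim
  rw [le_inv_mul_iff₀ hs]
  have hz := hf n (AffineMap.lineMap x y (-s))
  rw [AffineMap.apply_lineMap, AffineMap.lineMap_apply_module] at hz
  rw [(b n).apply_lineMap, AffineMap.lineMap_apply_module (b n x)]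
  simp only [smul_eq_mul] at hz ⊢
  linarith

lemma convex_tendsto_zero {N : ℕ} {φ : ℕ → E N → ℝ} (hφ : ∀ n, ConvexOn ℝ univ (φ n))
    {f : ℕ → E N →ᵃ[ℝ] ℝ} (hf : ∀ n y, f n y ≤ φ n y) :
    Convex ℝ {y | Tendsto (fun n => φ n y - f n y) atTop (𝓝 0)} := by
  intro y hy z hz a b ha hb hab
  have hlim := (Tendsto.const_mul a hy).add (Tendsto.const_mul b hz)
  simp only [mul_zero, add_zero] at hlim
  refine squeeze_zero (fun n => sub_nonneg.2 (hf n _)) (fun n => ?_) hlim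
  have h1 := (hφ n).2 (mem_univ y) (mem_univ z) ha hb hab
  have h2 : f n (a • y + b • z) = a • f n y + b • f n z := Convex.combo_affine_apply hab
  rw [h2]
  simp only [smul_eq_mul] at h1 ⊢
  linarith

/-- If `(φ^n)` is asymptotically affine on each member of a family of nonempty, convex,
relatively open sets with nonempty intersection, then it is asymptotically affine on the
convex hull of their union. -/
theorem stmt4 {N : ℕ} {I : Type*} (φ : ℕ → E N → ℝ) (hφ : ∀ n, IsConvexLipschitz (φ n))
    (V : I → Set (E N)) (hne : ∀ i, (V i).Nonempty) (hconv : ∀ i, Convex ℝ (V i))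
    (hopen : ∀ i, IsRelOpen (V i)) (haff : ∀ i, AsympAffineOn φ (V i))
    (hint : (⋂ i, V i).Nonempty) :
    AsympAffineOn φ (convexHull ℝ (⋃ i, V i)) := by
  obtain ⟨x, hx⟩ := hint
  rw [mem_iInter] at hx
  choose f hfle hfx using fun n : ℕ =>
    exists_affine_minorant (hφ n) x (Nat.one_div_pos_of_nat (α := ℝ) (n := n))
  have hfx0 : Tendsto (fun n => φ n x - f n x) atTop (𝓝 0) := by
    simpa [hfx] using tendsto_one_div_add_atTop_nhds_zero_nat (𝕜 := ℝ)
  refine ⟨fun n => f n, fun n => ⟨f n, rfl⟩, fun y hy => ?_⟩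
  refine convexHull_min (iUnion_subset fun i y hy => ?_)
    (convex_tendsto_zero (fun n => (hφ n).1) hfle) hy
  obtain ⟨a, ha, hlim⟩ := haff i
  choose b hb using ha
  simp only [hb] at hlim
  obtain ⟨s, hs, hz⟩ := (hopen i).exists_opposite (hx i) hy
  exact tendsto_of_opposite hfle hs hfx0 (hlim x (hx i)) (hlim y hy) (hlim _ hz)
end
end

section
/- Let (V_i)_{i∈I} be a family of nonempty, convex, relatively open subsets of ℝ^N and suppose x ∈ ⋂_{i∈I} V_i. Then ⋂_{i∈I} closure(V_i) = closure(⋂_{i∈I} V_i). -/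
/-!
The inclusion `⊇` is monotonicity of the closure. For `⊆`, let `y` lie in every `closure (V i)`.
By the line segment principle (`IsRelOpen.lineMap_mem`), each half-open segment `[x, y)` lies in
`V i`, so `[x, y)` lies in the intersection of the `V i`, and `y` is a limit of points of `[x, y)`.
No uniformity in `i` is needed, because the segment does not depend on `i`.
-/

open MeasureTheory Set Filter Topology

noncomputable section

/-- A relatively open set contains, around each of its points, a small ball of its affine span. -/
lemma IsRelOpen.exists_ball {N : ℕ} {V : Set (E N)} (hV : IsRelOpen V) {x : E N} (hx : x ∈ V) :
    ∃ ε > 0, ∀ z ∈ affineSpan ℝ V, dist z x < ε → z ∈ V := by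
  have hx' : x ∈ intrinsicInterior ℝ V := hV ▸ hx
  obtain ⟨x₀, hx₀, rfl⟩ := mem_intrinsicInterior.1 hx'
  obtain ⟨ε, hε, hball⟩ := Metric.mem_nhds_iff.1 (mem_interior_iff_mem_nhds.1 hx₀)
  exact ⟨ε, hε, fun z hz hd => hball (show (⟨z, hz⟩ : affineSpan ℝ V) ∈ Metric.ball x₀ ε from hd)⟩

/-- Line segment principle: the half-open segment from a point of a convex relatively open set
to a point of its closure stays in the set. The point `(1 - t) x + t y` is rewritten as
`(1 - t) x' + t y'`, where `y' ∈ V` is close to `y` and `x' = x + t / (1 - t) (y - y')` is a point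
of the affine span close to `x`, hence in `V`. -/
lemma IsRelOpen.lineMap_mem {N : ℕ} {V : Set (E N)} (hV : IsRelOpen V) (hc : Convex ℝ V)
    {x y : E N} (hx : x ∈ V) (hy : y ∈ closure V) {t : ℝ} (ht0 : 0 ≤ t) (ht1 : t < 1) :
    AffineMap.lineMap x y t ∈ V := by
  obtain ⟨ε, hε, hball⟩ := hV.exists_ball hx
  have hs : 0 < 1 - t := by linarith
  have hyA : y ∈ affineSpan ℝ V :=
    closure_minimal (subset_affineSpan ℝ V) (affineSpan ℝ V).closed_of_finiteDimensional hy
  obtain ⟨y', hy', hd⟩ := Metric.mem_closure_iff.1 hy (ε * (1 - t)) (by positivity)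
  have hx' : (t / (1 - t)) • (y - y') + x ∈ V := by
    apply hball
    · exact AffineSubspace.smul_vsub_vadd_mem _ _ hyA (subset_affineSpan ℝ V hy')
        (subset_affineSpan ℝ V hx)
    · rw [dist_eq_norm, add_sub_cancel_right, norm_smul, Real.norm_of_nonneg (by positivity),
        ← dist_eq_norm, div_mul_eq_mul_div, div_lt_iff₀ hs]
      nlinarith [dist_nonneg (x := y) (y := y')]
  have key := hc hx' hy' hs.le ht0 (by ring)
  convert key using 1
  rw [AffineMap.lineMap_apply_module, smul_add, smul_smul, mul_div_cancel₀ _ hs.ne']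
  module

/-- For a family of nonempty, convex, relatively open sets with a common point, the
intersection of the closures equals the closure of the intersection. -/
theorem stmt5 {N : ℕ} {I : Type*} (V : I → Set (E N))
    (hne : ∀ i, (V i).Nonempty) (hconv : ∀ i, Convex ℝ (V i)) (hopen : ∀ i, IsRelOpen (V i))
    (x : E N) (hx : x ∈ ⋂ i, V i) :
    (⋂ i, closure (V i)) = closure (⋂ i, V i) := by
  apply Subset.antisymm
  · intro y hy
    have htend : Tendsto (fun t : ℝ => AffineMap.lineMap x y t) (𝓝[<] (1 : ℝ)) (𝓝 y) := by
      have h : Continuous (fun t : ℝ => AffineMap.lineMap x y t) := AffineMap.lineMap_continuous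
      simpa using (h.tendsto 1).mono_left nhdsWithin_le_nhds
    refine mem_closure_of_tendsto htend ?_
    filter_upwards [Ioo_mem_nhdsLT (zero_lt_one' ℝ)] with t ht
    exact mem_iInter.2 fun i => (hopen i).lineMap_mem (hconv i) (mem_iInter.1 hx i)
      (mem_iInter.1 hy i) ht.1.le ht.2
  · exact subset_iInter fun i => closure_mono (iInter_subset V i)
end
end

section
/- Let (φ^n)_{n∈ℕ} be a sequence of convex Lipschitz functions φ^n : ℝ^N → ℝ, and for x ∈ ℝ^N let A_x := A_x((φ^n)_n) be the relative interior of the convex hull of the union of all nonempty, convex, relatively open sets V ⊆ ℝ^N with x ∈ V on which (φ^n)_n is asymptotically affine. Then the family {A_x : x ∈ ℝ^N} is a convex partition of ℝ^N: each A_x is a nonempty, convex, relatively open set containing x, and for any x, y ∈ ℝ^N, if A_x ∩ A_y ≠ ∅ then A_x = A_y. -/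
/-!
The key point is that `A_x` is itself the largest member of the family of nonempty, convex,
relatively open sets through `x` on which `φ` is asymptotically affine. Granting this, if
`z ∈ A_x`, then `A_x` is a member of the family at `z`, so `A_x ⊆ A_z`; then `x ∈ A_z`, hence
`A_z ⊆ A_x` by symmetry. So `A_x = A_z` for every `z ∈ A_x`, which gives the partition.

For maximality, subtract from `φ n` an affine minorant that is `1 / (n + 1)`-close to it at `x`.
The difference `ψ n` is convex and nonnegative with `ψ n x → 0`. If `φ` is asymptotically affine
on a relatively open convex `V ∋ x` and `y ∈ V`, then some `w ∈ V` lies beyond `x` on the line from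
`y`, and a fixed positive combination of `ψ n y` and `ψ n w`, minus a multiple of `ψ n x`, tends
to `0`; hence `ψ n y → 0`. The set where `ψ n → 0` is convex, so it contains the convex hull of the
union of all such `V`, and the same affine functions serve on all of it.

The geometry of relative interiors is reduced to an algebraic criterion
(`mem_intrinsicInterior_iff_extend`): `x` is in the relative interior of a convex set `C` iff
`x ∈ C` and every segment of `C` ending at `x` can be prolonged beyond `x` within `C`.
-/

open MeasureTheory Set Filter Topology

noncomputable section

/-- The metric form of the relative interior: a relative ball around `x` is contained in `C`. -/
lemma mem_intrinsicInterior_iff_ball {N : ℕ} {C : Set (E N)} {x : E N} :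
    x ∈ intrinsicInterior ℝ C ↔
      x ∈ C ∧ ∃ r > 0, ∀ w ∈ affineSpan ℝ C, dist w x < r → w ∈ C := by
  rw [mem_intrinsicInterior]
  constructor
  · rintro ⟨y, hy, rfl⟩
    have hyC : y ∈ ((↑) ⁻¹' C : Set (affineSpan ℝ C)) := interior_subset hy
    refine ⟨hyC, ?_⟩
    rw [mem_interior_iff_mem_nhds, Metric.mem_nhds_iff] at hy
    obtain ⟨r, hr, h⟩ := hy
    exact ⟨r, hr, fun w hw hd => h (show (⟨w, hw⟩ : affineSpan ℝ C) ∈ Metric.ball y r from hd)⟩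
  · rintro ⟨hx, r, hr, h⟩
    refine ⟨⟨x, subset_affineSpan ℝ _ hx⟩, ?_, rfl⟩
    rw [mem_interior_iff_mem_nhds, Metric.mem_nhds_iff]
    exact ⟨r, hr, fun w hw => h w w.2 hw⟩

lemma extend_mem_affineSpan {N : ℕ} {C : Set (E N)} {x y : E N} (hx : x ∈ affineSpan ℝ C)
    (hy : y ∈ affineSpan ℝ C) (t : ℝ) : x + t • (x - y) ∈ affineSpan ℝ C := by
  have := AffineMap.lineMap_mem (-t) hx hy
  rw [AffineMap.lineMap_apply_module'] at this
  convert this using 1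
  module

/-- For convex `C`, the point `x` is in the relative interior iff every segment from a point of
`C` to `x` can be prolonged beyond `x` within `C`. -/
lemma mem_intrinsicInterior_iff_extend {N : ℕ} {C : Set (E N)} (hC : Convex ℝ C) {x : E N} :
    x ∈ intrinsicInterior ℝ C ↔
      x ∈ C ∧ ∀ y ∈ C, ∃ ε : ℝ, 0 < ε ∧ x + ε • (x - y) ∈ C := by
  constructor
  · intro h
    obtain ⟨hx, r, hr, h⟩ := mem_intrinsicInterior_iff_ball.1 h
    refine ⟨hx, fun y hy => ?_⟩
    have hpos : 0 < ‖x - y‖ + 1 := by positivity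
    refine ⟨r / (‖x - y‖ + 1), by positivity, h _ ?_ ?_⟩
    · exact extend_mem_affineSpan (subset_affineSpan ℝ _ hx) (subset_affineSpan ℝ _ hy) _
    · rw [dist_eq_norm, add_sub_cancel_left, norm_smul, Real.norm_of_nonneg (by positivity),
        div_mul_eq_mul_div, div_lt_iff₀ hpos]
      nlinarith
  · rintro ⟨hx, h⟩
    -- `x` lies strictly between a relative interior point `z` and a point `w` of `C`, so a
    -- homothety centred at `w` carries a relative ball around `z` to one around `x`.
    obtain ⟨z, hz⟩ := Set.Nonempty.intrinsicInterior hC ⟨x, hx⟩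
    obtain ⟨hzC, r, hr, hball⟩ := mem_intrinsicInterior_iff_ball.1 hz
    obtain ⟨ε, hε, hw⟩ := h z hzC
    set w := x + ε • (x - z) with hwdef
    refine mem_intrinsicInterior_iff_ball.2 ⟨hx, r * (ε / (1 + ε)), by positivity, ?_⟩
    intro v hv hd
    have hz' : v + ε⁻¹ • (v - w) ∈ C := by
      refine hball _ (extend_mem_affineSpan hv (subset_affineSpan ℝ _ hw) _) ?_
      have : v + ε⁻¹ • (v - w) - z = ((1 + ε) / ε) • (v - x) := by
        rw [hwdef]
        match_scalars <;> field_simp <;> ring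
      rw [dist_eq_norm, this, norm_smul, Real.norm_of_nonneg (by positivity), ← dist_eq_norm]
      calc (1 + ε) / ε * dist v x < (1 + ε) / ε * (r * (ε / (1 + ε))) := by gcongr
        _ = r := by field_simp
    have hcomb := hC hw hz' (a := 1 / (1 + ε)) (b := ε / (1 + ε)) (by positivity) (by positivity)
      (by field_simp)
    convert hcomb using 1
    match_scalars <;> field_simp <;> ring

/-- A half-open segment from a relative interior point to a point of a convex set stays in the
relative interior. -/
lemma combo_mem_intrinsicInterior {N : ℕ} {C : Set (E N)} (hC : Convex ℝ C) {x y : E N}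
    (hx : x ∈ intrinsicInterior ℝ C) (hy : y ∈ C) {t : ℝ} (ht0 : 0 ≤ t) (ht1 : t < 1) :
    (1 - t) • x + t • y ∈ intrinsicInterior ℝ C := by
  obtain ⟨hxC, h⟩ := (mem_intrinsicInterior_iff_extend hC).1 hx
  refine (mem_intrinsicInterior_iff_extend hC).2
    ⟨hC hxC hy (by linarith) ht0 (by ring), fun q hq => ?_⟩
  obtain ⟨ε, hε, he⟩ := h q hq
  have ht1' : 0 < 1 - t := by linarith
  have hpos : 0 < 1 + t * ε := by positivity
  -- The prolonged point is sought on the segment from `x + ε • (x - q)` to `y`; comparing the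
  -- coefficients of `q` forces the value of the prolongation parameter.
  refine ⟨ε * (1 - t) / (1 + t * ε), by positivity, ?_⟩
  have hcomb := hC he hy (a := (1 - t) / (1 + t * ε)) (b := t * (1 + ε) / (1 + t * ε))
    (by positivity) (by positivity) (by field_simp; ring)
  convert hcomb using 1
  match_scalars <;> field_simp <;> ring

lemma convex_intrinsicInterior {N : ℕ} {C : Set (E N)} (hC : Convex ℝ C) :
    Convex ℝ (intrinsicInterior ℝ C) := by
  intro x hx y hy a b ha hb hab
  obtain rfl : a = 1 - b := by linarith
  rcases eq_or_lt_of_le ha with h | h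
  · obtain rfl : b = 1 := by linarith
    simpa using hy
  · exact combo_mem_intrinsicInterior hC hx (intrinsicInterior_subset hy) hb (by linarith)

lemma isRelOpen_intrinsicInterior {N : ℕ} {C : Set (E N)} (hC : Convex ℝ C) :
    IsRelOpen (intrinsicInterior ℝ C) := by
  refine Subset.antisymm (fun x hx => ?_) intrinsicInterior_subset
  refine (mem_intrinsicInterior_iff_extend (convex_intrinsicInterior hC)).2 ⟨hx, fun y hy => ?_⟩
  obtain ⟨ε, hε, he⟩ := ((mem_intrinsicInterior_iff_extend hC).1 hx).2 y
    (intrinsicInterior_subset hy)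
  refine ⟨ε / 2, by positivity, ?_⟩
  have := combo_mem_intrinsicInterior hC hx he (t := 1 / 2) (by norm_num) (by norm_num)
  convert this using 1
  module

lemma subset_intrinsicInterior_of_isRelOpen {N : ℕ} {C V : Set (E N)} (hC : Convex ℝ C)
    (hV : Convex ℝ V) (hVo : IsRelOpen V) (hVC : V ⊆ C) {x : E N} (hxV : x ∈ V)
    (hx : x ∈ intrinsicInterior ℝ C) : V ⊆ intrinsicInterior ℝ C := by
  intro y hy
  have hy' : y ∈ intrinsicInterior ℝ V := by rwa [← hVo]
  obtain ⟨ε, hε, he⟩ := ((mem_intrinsicInterior_iff_extend hV).1 hy').2 x hxV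
  have := combo_mem_intrinsicInterior hC hx (hVC he) (t := 1 / (1 + ε)) (by positivity)
    (by rw [div_lt_one (by positivity)]; linarith)
  convert this using 1
  match_scalars <;> field_simp <;> ring

/-- The family of sets whose union generates `Acomp φ x`. -/
def AffFamily {N : ℕ} (φ : ℕ → E N → ℝ) (x : E N) : Set (Set (E N)) :=
  {V | V.Nonempty ∧ Convex ℝ V ∧ IsRelOpen V ∧ x ∈ V ∧ AsympAffineOn φ V}

lemma Acomp_eq {N : ℕ} (φ : ℕ → E N → ℝ) (x : E N) :
    Acomp φ x = intrinsicInterior ℝ (convexHull ℝ (⋃₀ AffFamily φ x)) := rfl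

lemma singleton_mem_AffFamily {N : ℕ} (φ : ℕ → E N → ℝ) (x : E N) : {x} ∈ AffFamily φ x := by
  refine ⟨singleton_nonempty x, convex_singleton x, (intrinsicInterior_singleton x).symm,
    mem_singleton x, fun n _ => φ n x, fun n => ⟨AffineMap.const ℝ _ (φ n x), rfl⟩, ?_⟩
  rintro y rfl
  simp

lemma mem_Acomp {N : ℕ} (φ : ℕ → E N → ℝ) (x : E N) : x ∈ Acomp φ x := by
  rw [Acomp_eq]
  set U := ⋃₀ AffFamily φ x
  have hC : Convex ℝ (convexHull ℝ U) := convex_convexHull ℝ U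
  have hx : x ∈ convexHull ℝ U :=
    subset_convexHull ℝ U ⟨{x}, singleton_mem_AffFamily φ x, mem_singleton x⟩
  refine (mem_intrinsicInterior_iff_extend hC).2 ⟨hx, fun y hy => ?_⟩
  -- The set of points from which segments to `x` can be prolonged is convex and contains `U`.
  refine convexHull_min (t := {y | ∃ ε : ℝ, 0 < ε ∧ x + ε • (x - y) ∈ convexHull ℝ U}) ?_ ?_ hy
  · rintro y ⟨V, hV, hyV⟩
    obtain ⟨-, hVc, hVo, hxV, -⟩ := id hV
    rw [hVo] at hxV
    obtain ⟨ε, hε, he⟩ := ((mem_intrinsicInterior_iff_extend hVc).1 hxV).2 y hyV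
    exact ⟨ε, hε, subset_convexHull ℝ U ⟨V, hV, he⟩⟩
  · rintro y₁ ⟨ε₁, hε₁, h₁⟩ y₂ ⟨ε₂, hε₂, h₂⟩ a b ha hb hab
    have shrink : ∀ (y : E N) (ε ε' : ℝ), 0 < ε' → ε' ≤ ε → x + ε • (x - y) ∈ convexHull ℝ U →
        x + ε' • (x - y) ∈ convexHull ℝ U := by
      intro y ε ε' h0 hle h
      have hε : 0 < ε := h0.trans_le hle
      have := hC hx h (a := 1 - ε' / ε) (b := ε' / ε)
        (sub_nonneg.2 ((div_le_one hε).2 hle)) (by positivity) (by ring)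
      convert this using 1
      match_scalars <;> field_simp <;> ring
    have hm : 0 < min ε₁ ε₂ := lt_min hε₁ hε₂
    refine ⟨min ε₁ ε₂, hm, ?_⟩
    have := hC (shrink y₁ ε₁ _ hm (min_le_left _ _) h₁) (shrink y₂ ε₂ _ hm (min_le_right _ _) h₂)
      ha hb hab
    convert this using 1
    obtain rfl : a = 1 - b := by linarith
    module

/-- Affine minorants that asymptotically touch `φ` at `x`; they play the role of subgradients. -/
lemma exists_affine_minorants {N : ℕ} (φ : ℕ → E N → ℝ) (hφ : ∀ n, IsConvexLipschitz (φ n))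
    (x : E N) : ∃ f : ℕ → E N →ᵃ[ℝ] ℝ, (∀ n y, f n y ≤ φ n y) ∧
      Tendsto (fun n => φ n x - f n x) atTop (𝓝 0) := by
  have key : ∀ n : ℕ, ∃ f : E N →ᵃ[ℝ] ℝ, (∀ y, f y ≤ φ n y) ∧
      f x = φ n x - 1 / ((n : ℝ) + 1) := by
    intro n
    obtain ⟨hc, K, hK⟩ := hφ n
    have hpos : 0 < 1 / ((n : ℝ) + 1) := by positivity
    obtain ⟨l, c, hl, hlx⟩ := ConvexOn.exists_affine_le_of_lt (𝕜 := ℝ) (mem_univ x)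
      (show φ n x - 1 / ((n : ℝ) + 1) < φ n x by linarith) isClosed_univ
      (hK.continuous.lowerSemicontinuous.lowerSemicontinuousOn _) hc
    refine ⟨(l : E N →ₗ[ℝ] ℝ).toAffineMap + AffineMap.const ℝ _ c, fun y => ?_, ?_⟩
    · simpa using hl ⟨y, mem_univ y⟩
    · simpa using hlx
  choose f hf hfx using key
  refine ⟨f, hf, ?_⟩
  simp only [hfx, sub_sub_cancel]
  exact tendsto_one_div_add_atTop_nhds_zero_nat

/-- Minorants touching `φ` at `x` asymptotically agree with `φ` on every member of the family. -/
lemma tendsto_of_mem_AffFamily {N : ℕ} {φ : ℕ → E N → ℝ} {x : E N} {f : ℕ → E N →ᵃ[ℝ] ℝ}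
    (hf : ∀ n y, f n y ≤ φ n y) (hfx : Tendsto (fun n => φ n x - f n x) atTop (𝓝 0))
    {V : Set (E N)} (hV : V ∈ AffFamily φ x) {y : E N} (hy : y ∈ V) :
    Tendsto (fun n => φ n y - f n y) atTop (𝓝 0) := by
  obtain ⟨-, hVc, hVo, hxV, a, ha, hav⟩ := hV
  choose g hg using ha
  have hx' : x ∈ intrinsicInterior ℝ V := by rwa [← hVo]
  obtain ⟨ε, hε, he⟩ := ((mem_intrinsicInterior_iff_extend hVc).1 hx').2 y hy
  set w := x + ε • (x - y) with hw
  -- Affine maps satisfy the same linear relation as the collinear points `x`, `y`, `w`.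
  have haff : ∀ h : E N →ᵃ[ℝ] ℝ, h w = h x + ε * (h x - h y) := by
    intro h
    have : w = AffineMap.lineMap x y (-ε) := by
      rw [AffineMap.lineMap_apply_module', hw]
      module
    rw [this, AffineMap.apply_lineMap, AffineMap.lineMap_apply_module']
    simp only [smul_eq_mul]
    ring
  have h1 := hav y hy
  have h2 := hav x hxV
  have h3 := hav w he
  have hlim : Tendsto (fun n => (φ n y - a n y) + ε⁻¹ * (φ n w - a n w)
      - (1 + ε⁻¹) * (φ n x - a n x) + (1 + ε⁻¹) * (φ n x - f n x)) atTop (𝓝 0) := by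
    have := ((h1.add (h3.const_mul ε⁻¹)).sub (h2.const_mul (1 + ε⁻¹))).add
      (hfx.const_mul (1 + ε⁻¹))
    simpa using this
  refine squeeze_zero (fun n => sub_nonneg.2 (hf n y)) (fun n => ?_) hlim
  have hgn := haff (g n)
  have hfn := haff (f n)
  have hwn : 0 ≤ ε⁻¹ * (φ n w - f n w) := mul_nonneg (by positivity) (sub_nonneg.2 (hf n w))
  have hid : (φ n y - a n y) + ε⁻¹ * (φ n w - a n w) - (1 + ε⁻¹) * (φ n x - a n x)
      + (1 + ε⁻¹) * (φ n x - f n x) = (φ n y - f n y) + ε⁻¹ * (φ n w - f n w) := by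
    rw [hg n, hgn, hfn]
    field_simp
    ring
  rw [hid]
  linarith

lemma asympAffineOn_Acomp {N : ℕ} (φ : ℕ → E N → ℝ) (hφ : ∀ n, IsConvexLipschitz (φ n))
    (x : E N) : AsympAffineOn φ (Acomp φ x) := by
  obtain ⟨f, hf, hfx⟩ := exists_affine_minorants φ hφ x
  refine ⟨fun n => f n, fun n => ⟨f n, rfl⟩, fun y hy => ?_⟩
  refine convexHull_min (t := {y | Tendsto (fun n => φ n y - f n y) atTop (𝓝 0)}) ?_ ?_
    (intrinsicInterior_subset hy)
  · rintro y ⟨V, hV, hyV⟩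
    exact tendsto_of_mem_AffFamily hf hfx hV hyV
  · intro y₁ h₁ y₂ h₂ a b ha hb hab
    have hlim : Tendsto (fun n => a * (φ n y₁ - f n y₁) + b * (φ n y₂ - f n y₂)) atTop (𝓝 0) := by
      simpa using (h₁.const_mul a).add (h₂.const_mul b)
    refine squeeze_zero (fun n => sub_nonneg.2 (hf n _)) (fun n => ?_) hlim
    have h := (hφ n).1.2 (mem_univ y₁) (mem_univ y₂) ha hb hab
    have he : f n (a • y₁ + b • y₂) = a * f n y₁ + b * f n y₂ := by
      simpa using Convex.combo_affine_apply (f := f n) (x := y₁) (y := y₂) hab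
    simp only [smul_eq_mul] at h
    rw [he]
    linarith

lemma convex_Acomp {N : ℕ} (φ : ℕ → E N → ℝ) (x : E N) : Convex ℝ (Acomp φ x) :=
  convex_intrinsicInterior (convex_convexHull ℝ _)

lemma isRelOpen_Acomp {N : ℕ} (φ : ℕ → E N → ℝ) (x : E N) : IsRelOpen (Acomp φ x) :=
  isRelOpen_intrinsicInterior (convex_convexHull ℝ _)

/-- `Acomp φ x` is an upper bound of the family at `x`. -/
lemma subset_Acomp {N : ℕ} {φ : ℕ → E N → ℝ} {x : E N} {V : Set (E N)} (hV : V ∈ AffFamily φ x) :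
    V ⊆ Acomp φ x :=
  subset_intrinsicInterior_of_isRelOpen (convex_convexHull ℝ _) hV.2.1 hV.2.2.1
    ((subset_sUnion_of_mem hV).trans (subset_convexHull ℝ _)) hV.2.2.2.1 (mem_Acomp φ x)

/-- `Acomp φ x` belongs to the family at each of its points. -/
lemma Acomp_mem_AffFamily {N : ℕ} {φ : ℕ → E N → ℝ} (hφ : ∀ n, IsConvexLipschitz (φ n))
    {x z : E N} (hz : z ∈ Acomp φ x) : Acomp φ x ∈ AffFamily φ z :=
  ⟨⟨z, hz⟩, convex_Acomp φ x, isRelOpen_Acomp φ x, hz, asympAffineOn_Acomp φ hφ x⟩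

lemma Acomp_eq_of_mem {N : ℕ} {φ : ℕ → E N → ℝ} (hφ : ∀ n, IsConvexLipschitz (φ n))
    {x z : E N} (hz : z ∈ Acomp φ x) : Acomp φ x = Acomp φ z := by
  have h : Acomp φ x ⊆ Acomp φ z := subset_Acomp (Acomp_mem_AffFamily hφ hz)
  exact h.antisymm (subset_Acomp (Acomp_mem_AffFamily hφ (h (mem_Acomp φ x))))

/-- The asymptotically affine components `{A_x : x ∈ ℝ^N}` form a convex partition of `ℝ^N`. -/
theorem stmt9 {N : ℕ} (φ : ℕ → E N → ℝ) (hφ : ∀ n, IsConvexLipschitz (φ n)) :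
    (∀ x : E N, x ∈ Acomp φ x ∧ (Acomp φ x).Nonempty ∧ Convex ℝ (Acomp φ x) ∧
      IsRelOpen (Acomp φ x)) ∧
    (∀ x y : E N, (Acomp φ x ∩ Acomp φ y).Nonempty → Acomp φ x = Acomp φ y) := by
  refine ⟨fun x => ⟨mem_Acomp φ x, ⟨x, mem_Acomp φ x⟩, convex_Acomp φ x, isRelOpen_Acomp φ x⟩, ?_⟩
  rintro x y ⟨z, hzx, hzy⟩
  exact (Acomp_eq_of_mem hφ hzx).trans (Acomp_eq_of_mem hφ hzy).symm
end
end

section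
/- Let μ and ν be finite Borel measures on ℝ with finite first moments such that ∫φ dμ ≤ ∫φ dν for every convex Lipschitz φ : ℝ → ℝ, and let c < d be real numbers. Then the following are equivalent: (1) u_ν(x) > u_μ(x) for every x ∈ (c,d), where u_λ(x) := ∫|x−y| λ(dy); (2) for every sequence (φ^n)_{n∈ℕ} of convex Lipschitz functions φ^n : ℝ → ℝ with ∫φ^n dν − ∫φ^n dμ → 0, there exist affine functions a_n : ℝ → ℝ such that φ^n(x) − a_n(x) → 0 for every x ∈ (c,d). -/
/-! Strict inequality of the potentials is necessary: if they agree at `x₀`, consider the constant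
sequence `|· - x₀|`. This function has a kink at `x₀`, so it is not asymptotically affine.

For sufficiency, write `D f = ∫ f dν - ∫ f dμ`; it vanishes on affine functions and is nonnegative on
convex Lipschitz ones. Let `φ` be convex Lipschitz with right derivative `r`, and let `t ∈ [a, b]`.
Subtracting from `φ` its convex excesses over the tangents at `a` (to the left of `a`) and at `b`
(to the right of `b`) does not increase `D` and leaves a function which, up to an affine term and an error of
size `s (b - a)`, equals `(s / 2) |· - t|`, where `s = r b - r a`. Hence
`s (D |· - t| - 2 (b - a) ν(ℝ)) ≤ 2 D φ` (`slope_increment_bound`). If `D |· - t| > 0`, then for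
a sequence with `D φⁿ → 0` the increments of the slopes `rⁿ` over small intervals with endpoint `t`
tend to `0`. By connectedness of `(c, d)` the increments between any two of its points tend to `0`,
so `φⁿ` minus its tangent at the midpoint tends to `0` on `(c, d)`. -/

open MeasureTheory Set Filter Topology

noncomputable section

/-- A function `φ : ℝ → ℝ` is convex and Lipschitz. -/
def IsConvexLipschitz1 (φ : ℝ → ℝ) : Prop :=
  ConvexOn ℝ Set.univ φ ∧ ∃ K : NNReal, LipschitzWith K φ

/-- `k` selects a subgradient of `f` at every point. -/
def HasSubgradients (f k : ℝ → ℝ) : Prop :=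
  ∀ x y, f x + k x * (y - x) ≤ f y

theorem HasSubgradients.isConvexLipschitz {f k : ℝ → ℝ} (h : HasSubgradients f k) {K : NNReal}
    (hK : ∀ x, |k x| ≤ K) : IsConvexLipschitz1 f := by
  constructor
  · refine ⟨convex_univ, ?_⟩
    intro x _ y _ a b ha hb hab
    simp only [smul_eq_mul]
    have h1 := mul_le_mul_of_nonneg_left (h (a * x + b * y) x) ha
    have h2 := mul_le_mul_of_nonneg_left (h (a * x + b * y) y) hb
    have hb' : b = 1 - a := by linarith
    subst hb'
    linarith
  · refine ⟨K, LipschitzWith.of_le_add_mul K ?_⟩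
    intro x y
    have h1 := h x y
    have h2 : -(k x * (y - x)) ≤ |k x| * |y - x| := by
      rw [← abs_mul]; exact neg_le_abs _
    have h3 : |k x| * |y - x| ≤ K * |y - x| :=
      mul_le_mul_of_nonneg_right (hK x) (abs_nonneg _)
    rw [Real.dist_eq, abs_sub_comm x y]
    linarith

theorem IsConvexLipschitz1.exists_subgradients {φ : ℝ → ℝ} (h : IsConvexLipschitz1 φ) :
    ∃ r : ℝ → ℝ, HasSubgradients φ r ∧ ∃ K : NNReal, ∀ x, |r x| ≤ K := by
  obtain ⟨hc, K, hK⟩ := h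
  have hsub : HasSubgradients φ (fun x => derivWithin φ (Ioi x) x) := by
    intro x y
    rcases lt_trichotomy x y with hxy | rfl | hxy
    · have := hc.rightDeriv_le_slope_of_mem_interior (x := x) (y := y) (by simp) (mem_univ _) hxy
      rw [slope_def_field, le_div_iff₀ (by linarith)] at this
      dsimp only
      linarith
    · simp
    · have h1 := hc.slope_le_leftDeriv_of_mem_interior (x := y) (y := x) (mem_univ _) (by simp) hxy
      have h2 := hc.leftDeriv_le_rightDeriv_of_mem_interior (x := x) (by simp)
      have h3 := h1.trans h2
      rw [slope_def_field, div_le_iff₀ (by linarith)] at h3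
      dsimp only
      linarith
  refine ⟨_, hsub, K, fun x => ?_⟩
  have h1 := hsub x (x + 1)
  have h2 := hsub x (x - 1)
  have l1 := hK.dist_le_mul (x + 1) x
  have l2 := hK.dist_le_mul (x - 1) x
  rw [Real.dist_eq, Real.dist_eq] at l1 l2
  have e1 : |x + 1 - x| = 1 := by simp
  have e2 : |x - 1 - x| = 1 := by simp
  rw [e1] at l1
  rw [e2] at l2
  have := abs_le.1 l1
  have := abs_le.1 l2
  rw [abs_le]
  constructor <;> linarith

theorem HasSubgradients.mono {f k : ℝ → ℝ} (h : HasSubgradients f k) : Monotone k := by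
  intro x y hxy
  rcases hxy.eq_or_lt with rfl | hlt
  · exact le_rfl
  · have h1 := h x y
    have h2 := h y x
    have h3 : (k x - k y) * (y - x) ≤ 0 := by linarith
    have : 0 < y - x := by linarith
    nlinarith

/-- The excess of a convex function over its tangent at `a`, kept only to the left of `a`, is
convex Lipschitz. -/
theorem HasSubgradients.leftExcess {φ r : ℝ → ℝ} (h : HasSubgradients φ r) {K : NNReal}
    (hK : ∀ x, |r x| ≤ K) (a : ℝ) :
    IsConvexLipschitz1 (fun z => if z ≤ a then φ z - φ a - r a * (z - a) else 0) := by
  refine HasSubgradients.isConvexLipschitz (k := fun z => if z ≤ a then r z - r a else 0)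
    (K := K + K) ?_ ?_
  · intro x y
    dsimp only
    have hxy := h x y
    have hxa := h x a
    have hay := h a y
    by_cases hx : x ≤ a <;> by_cases hy : y ≤ a <;> simp only [hx, hy, if_true, if_false]
    · linarith
    · have := mul_nonneg (sub_nonneg.2 (h.mono hx)) (sub_nonneg.2 (not_le.1 hy).le)
      linarith
    · linarith
    · linarith
  · intro x
    have h1 := abs_le.1 (hK x)
    have h2 := abs_le.1 (hK a)
    rw [NNReal.coe_add]
    split_ifs
    · rw [abs_le]; constructor <;> linarith
    · simp

/-- The excess of a convex function over its tangent at `b`, kept only to the right of `b`, is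
convex Lipschitz. -/
theorem HasSubgradients.rightExcess {φ r : ℝ → ℝ} (h : HasSubgradients φ r) {K : NNReal}
    (hK : ∀ x, |r x| ≤ K) (b : ℝ) :
    IsConvexLipschitz1 (fun z => if b ≤ z then φ z - φ b - r b * (z - b) else 0) := by
  refine HasSubgradients.isConvexLipschitz (k := fun z => if b ≤ z then r z - r b else 0)
    (K := K + K) ?_ ?_
  · intro x y
    dsimp only
    have hxy := h x y
    have hxb := h x b
    have hby := h b y
    by_cases hx : b ≤ x <;> by_cases hy : b ≤ y <;> simp only [hx, hy, if_true, if_false]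
    · linarith
    · have := mul_nonneg (sub_nonneg.2 (h.mono hx)) (sub_nonneg.2 (not_le.1 hy).le)
      linarith
    · linarith
    · linarith
  · intro x
    have h1 := abs_le.1 (hK x)
    have h2 := abs_le.1 (hK b)
    rw [NNReal.coe_add]
    split_ifs
    · rw [abs_le]; constructor <;> linarith
    · simp

theorem IsConvexLipschitz1.integrable {φ : ℝ → ℝ} (h : IsConvexLipschitz1 φ) (μ : Measure ℝ)
    [IsFiniteMeasure μ] (hμ : Integrable (fun x => |x|) μ) : Integrable φ μ := by
  obtain ⟨-, K, hK⟩ := h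
  refine Integrable.mono' ((integrable_const |φ 0|).add (hμ.const_mul (K : ℝ)))
    hK.continuous.aestronglyMeasurable (ae_of_all _ fun x => ?_)
  have := hK.dist_le_mul x 0
  rw [Real.dist_eq, Real.dist_eq, sub_zero] at this
  have h2 : |φ x| ≤ |φ x - φ 0| + |φ 0| := by
    simpa using abs_add_le (φ x - φ 0) (φ 0)
  simp only [Real.norm_eq_abs, Pi.add_apply]
  linarith

theorem isConvexLipschitz_affine (m q : ℝ) : IsConvexLipschitz1 (fun z => m * z + q) :=
  HasSubgradients.isConvexLipschitz (k := fun _ => m) (K := ‖m‖₊)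
    (fun x y => by dsimp only; linarith) (fun x => by simp)

theorem isConvexLipschitz_abs (t : ℝ) : IsConvexLipschitz1 (fun z => |t - z|) := by
  refine HasSubgradients.isConvexLipschitz (k := fun z => if z ≤ t then -1 else 1) (K := 1) ?_ ?_
  · intro x y
    dsimp only
    split_ifs with hx
    · rw [abs_of_nonneg (sub_nonneg.2 hx)]
      linarith [le_abs_self (t - y)]
    · rw [abs_of_neg (by linarith : t - x < 0)]
      linarith [neg_abs_le (t - y)]
  · intro x
    split_ifs <;> simp

/-- The middle term is twice the function obtained from `φ` by replacing it outside `[a, b]` by its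
tangents at `a` and `b`. Up to an affine function, it differs from `(r b - r a) |t - ·|` by at most
`2 (r b - r a) (b - a)`. -/
theorem localized_sandwich {φ r : ℝ → ℝ} (h : HasSubgradients φ r) {a b t : ℝ} (hab : a < b)
    (hat : a ≤ t) (htb : t ≤ b) (z : ℝ) :
    (r b - r a) * |t - z| + ((r a + r b) * z + (2 * φ t - (r a + r b) * t))
        - 2 * (r b - r a) * (b - a)
      ≤ 2 * (φ z - (if z ≤ a then φ z - φ a - r a * (z - a) else 0)
        - (if b ≤ z then φ z - φ b - r b * (z - b) else 0)) ∧
    2 * (φ z - (if z ≤ a then φ z - φ a - r a * (z - a) else 0)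
        - (if b ≤ z then φ z - φ b - r b * (z - b) else 0))
      ≤ (r b - r a) * |t - z| + ((r a + r b) * z + (2 * φ t - (r a + r b) * t)) := by
  have hm := h.mono
  have hs : 0 ≤ r b - r a := sub_nonneg.2 (hm hab.le)
  have hrt1 := hm hat
  have hrt2 := hm htb
  have p1 := mul_nonneg hs (sub_nonneg.2 hat)
  have p2 := mul_nonneg hs (sub_nonneg.2 htb)
  by_cases hz : z ≤ a
  · have hz' : ¬ b ≤ z := by linarith
    simp only [hz, hz', if_true, if_false]
    rw [abs_of_nonneg (by linarith : 0 ≤ t - z)]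
    have h1 := h a t
    have h2 := h t a
    have p3 := mul_nonneg (sub_nonneg.2 hrt2) (sub_nonneg.2 hat)
    constructor <;> linarith
  by_cases hz' : b ≤ z
  · simp only [hz, hz', if_true, if_false]
    rw [abs_of_nonpos (by linarith : t - z ≤ 0)]
    have h1 := h b t
    have h2 := h t b
    have p3 := mul_nonneg (sub_nonneg.2 hrt1) (sub_nonneg.2 htb)
    constructor <;> linarith
  simp only [hz, hz', if_false]
  push Not at hz hz'
  have hrz1 := hm hz.le
  have hrz2 := hm hz'.le
  have h1 := h z t
  have h2 := h t z
  rcases le_total z t with hzt | hzt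
  · rw [abs_of_nonneg (by linarith : 0 ≤ t - z)]
    have p3 := mul_nonneg (sub_nonneg.2 hrz1) (sub_nonneg.2 hzt)
    have p4 := mul_nonneg (sub_nonneg.2 hrt2) (sub_nonneg.2 hzt)
    have p5 := mul_nonneg hs (sub_nonneg.2 hz.le)
    constructor <;> linarith
  · rw [abs_of_nonpos (by linarith : t - z ≤ 0)]
    have p3 := mul_nonneg (sub_nonneg.2 hrz2) (sub_nonneg.2 hzt)
    have p4 := mul_nonneg (sub_nonneg.2 hrt1) (sub_nonneg.2 hzt)
    have p5 := mul_nonneg hs (sub_nonneg.2 hz'.le)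
    constructor <;> linarith

/-- The gap between the potentials at `t` controls the increments of the slope of `φ` over short
intervals containing `t`; the bound is informative once `2 (b - a) ν(ℝ)` is below that gap. -/
theorem slope_increment_bound (μ ν : Measure ℝ) [IsFiniteMeasure μ] [IsFiniteMeasure ν]
    (hμmom : Integrable (fun x => |x|) μ) (hνmom : Integrable (fun x => |x|) ν)
    (horder : ∀ φ : ℝ → ℝ, IsConvexLipschitz1 φ → ∫ x, φ x ∂μ ≤ ∫ x, φ x ∂ν)
    {φ r : ℝ → ℝ} (hφ : IsConvexLipschitz1 φ) (h : HasSubgradients φ r) {K : NNReal}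
    (hK : ∀ x, |r x| ≤ K) {a b t : ℝ} (hab : a < b) (hat : a ≤ t) (htb : t ≤ b) :
    (r b - r a) * (∫ y, |t - y| ∂ν - ∫ y, |t - y| ∂μ - 2 * (b - a) * ν.real univ)
      ≤ 2 * (∫ x, φ x ∂ν - ∫ x, φ x ∂μ) := by
  have hL := h.leftExcess hK a
  have hR := h.rightExcess hK b
  have hS := localized_sandwich h hab hat htb
  have oL := horder _ hL
  have oR := horder _ hR
  -- affine functions have equal integrals, since their opposites are affine too
  have hA : ∀ m q : ℝ, ∫ x, (m * x + q) ∂μ = ∫ x, (m * x + q) ∂ν := by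
    intro m q
    refine le_antisymm (horder _ (isConvexLipschitz_affine m q)) ?_
    have := horder _ (isConvexLipschitz_affine (-m) (-q))
    have e : ∀ x : ℝ, -m * x + -q = -(m * x + q) := fun x => by ring
    simp only [e, integral_neg] at this
    linarith
  have hAff := hA (r a + r b) (2 * φ t - (r a + r b) * t)
  have cA := isConvexLipschitz_affine (r a + r b) (2 * φ t - (r a + r b) * t)
  have cT := isConvexLipschitz_abs t
  set L : ℝ → ℝ := fun z => if z ≤ a then φ z - φ a - r a * (z - a) else 0
  set R : ℝ → ℝ := fun z => if b ≤ z then φ z - φ b - r b * (z - b) else 0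
  set A : ℝ → ℝ := fun z => (r a + r b) * z + (2 * φ t - (r a + r b) * t)
  have hS' : ∀ z, (r b - r a) * |t - z| + A z - 2 * (r b - r a) * (b - a)
      ≤ 2 * (φ z - L z - R z) ∧ 2 * (φ z - L z - R z) ≤ (r b - r a) * |t - z| + A z := hS
  have kν : Integrable (fun z => φ z - L z) ν :=
    (hφ.integrable ν hνmom).sub (hL.integrable ν hνmom)
  have kμ : Integrable (fun z => φ z - L z) μ :=
    (hφ.integrable μ hμmom).sub (hL.integrable μ hμmom)
  have iν1 : ∫ z, 2 * (φ z - L z - R z) ∂ν = 2 * (∫ z, φ z ∂ν - ∫ z, L z ∂ν - ∫ z, R z ∂ν) := by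
    rw [integral_const_mul, integral_sub kν
      (hR.integrable ν hνmom), integral_sub (hφ.integrable ν hνmom) (hL.integrable ν hνmom)]
  have iμ1 : ∫ z, 2 * (φ z - L z - R z) ∂μ = 2 * (∫ z, φ z ∂μ - ∫ z, L z ∂μ - ∫ z, R z ∂μ) := by
    rw [integral_const_mul, integral_sub kμ
      (hR.integrable μ hμmom), integral_sub (hφ.integrable μ hμmom) (hL.integrable μ hμmom)]
  have jν : Integrable (fun z => (r b - r a) * |t - z| + A z) ν :=
    ((cT.integrable ν hνmom).const_mul (r b - r a)).add (cA.integrable ν hνmom)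
  have jμ : Integrable (fun z => (r b - r a) * |t - z| + A z) μ :=
    ((cT.integrable μ hμmom).const_mul (r b - r a)).add (cA.integrable μ hμmom)
  have iν2 : ∫ z, ((r b - r a) * |t - z| + A z - 2 * (r b - r a) * (b - a)) ∂ν
      = (r b - r a) * ∫ z, |t - z| ∂ν + ∫ z, A z ∂ν
        - ν.real univ * (2 * (r b - r a) * (b - a)) := by
    rw [integral_sub jν (integrable_const _), integral_add
      ((cT.integrable ν hνmom).const_mul (r b - r a)) (cA.integrable ν hνmom),
      integral_const_mul, integral_const, smul_eq_mul]
  have iμ2 : ∫ z, ((r b - r a) * |t - z| + A z) ∂μ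
      = (r b - r a) * ∫ z, |t - z| ∂μ + ∫ z, A z ∂μ := by
    rw [integral_add ((cT.integrable μ hμmom).const_mul (r b - r a)) (cA.integrable μ hμmom),
      integral_const_mul]
  have mν := integral_mono (μ := ν) (jν.sub (integrable_const (2 * (r b - r a) * (b - a))))
    ((kν.sub
      (hR.integrable ν hνmom)).const_mul 2) (fun z => (hS' z).1)
  have mμ := integral_mono (μ := μ) ((kμ.sub
      (hR.integrable μ hμmom)).const_mul 2) jμ (fun z => (hS' z).2)
  have mν' := iν2.symm.le.trans (mν.trans iν1.le)
  have mμ' := iμ1.symm.le.trans (mμ.trans iμ2.le)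
  linarith

theorem tendsto_slope_increment (μ ν : Measure ℝ) [IsFiniteMeasure μ] [IsFiniteMeasure ν]
    (hμmom : Integrable (fun x => |x|) μ) (hνmom : Integrable (fun x => |x|) ν)
    (horder : ∀ φ : ℝ → ℝ, IsConvexLipschitz1 φ → ∫ x, φ x ∂μ ≤ ∫ x, φ x ∂ν)
    {φ r : ℕ → ℝ → ℝ} (hφ : ∀ n, IsConvexLipschitz1 (φ n)) (h : ∀ n, HasSubgradients (φ n) (r n))
    (hK : ∀ n, ∃ K : NNReal, ∀ x, |r n x| ≤ K)
    (hlim : Tendsto (fun n => ∫ x, φ n x ∂ν - ∫ x, φ n x ∂μ) atTop (𝓝 0))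
    {a b t : ℝ} (hab : a < b) (hat : a ≤ t) (htb : t ≤ b)
    (hgap : 0 < ∫ y, |t - y| ∂ν - ∫ y, |t - y| ∂μ - 2 * (b - a) * ν.real univ) :
    Tendsto (fun n => r n b - r n a) atTop (𝓝 0) := by
  set w := ∫ y, |t - y| ∂ν - ∫ y, |t - y| ∂μ - 2 * (b - a) * ν.real univ
  have hlim' : Tendsto (fun n => 2 * (∫ x, φ n x ∂ν - ∫ x, φ n x ∂μ) / w) atTop (𝓝 0) := by
    simpa using (hlim.const_mul 2).div_const w
  refine squeeze_zero (fun n => sub_nonneg.2 ((h n).mono hab.le)) (fun n => ?_) hlim'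
  obtain ⟨K, hKn⟩ := hK n
  rw [le_div_iff₀ hgap]
  exact slope_increment_bound μ ν hμmom hνmom horder (hφ n) (h n) hKn hab hat htb

/-- In dimension one: `u_ν > u_μ` on `(c,d)` iff every sequence of convex Lipschitz `φ^n`
with `∫ φ^n dν - ∫ φ^n dμ → 0` is asymptotically affine on `(c,d)`. -/
theorem stmt15 (μ ν : Measure ℝ) [IsFiniteMeasure μ] [IsFiniteMeasure ν]
    (hμmom : Integrable (fun x => |x|) μ) (hνmom : Integrable (fun x => |x|) ν)
    (horder : ∀ φ : ℝ → ℝ, IsConvexLipschitz1 φ → ∫ x, φ x ∂μ ≤ ∫ x, φ x ∂ν)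
    (c d : ℝ) (hcd : c < d) :
    (∀ x ∈ Set.Ioo c d, ∫ y, |x - y| ∂μ < ∫ y, |x - y| ∂ν) ↔
    (∀ φ : ℕ → ℝ → ℝ, (∀ n, IsConvexLipschitz1 (φ n)) →
      Tendsto (fun n => ∫ x, φ n x ∂ν - ∫ x, φ n x ∂μ) atTop (nhds 0) →
      ∃ m q : ℕ → ℝ, ∀ x ∈ Set.Ioo c d,
        Tendsto (fun n => φ n x - (m n * x + q n)) atTop (nhds 0)) := by
  constructor
  · intro hgap φ hφ hlim
    choose r hr hK using fun n => (hφ n).exists_subgradients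
    have hloc : ∀ x ∈ Ioo c d, ∀ᶠ y in 𝓝[Ioo c d] x,
        Tendsto (fun n => r n y - r n x) atTop (𝓝 0) := by
      intro t ht
      have hcont : Tendsto (fun y => ∫ z, |t - z| ∂ν - ∫ z, |t - z| ∂μ
          - 2 * |y - t| * ν.real univ) (𝓝 t)
          (𝓝 (∫ z, |t - z| ∂ν - ∫ z, |t - z| ∂μ - 2 * |t - t| * ν.real univ)) :=
        Continuous.tendsto (by fun_prop) t
      have hpos : 0 < ∫ z, |t - z| ∂ν - ∫ z, |t - z| ∂μ - 2 * |t - t| * ν.real univ := by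
        have := hgap t ht
        simpa using this
      refine nhdsWithin_le_nhds ((hcont.eventually_const_lt hpos).mono fun y hy => ?_)
      rcases lt_trichotomy y t with hyt | rfl | hyt
      · rw [abs_of_neg (by linarith), neg_sub] at hy
        have := (tendsto_slope_increment μ ν hμmom hνmom horder hφ hr hK hlim hyt hyt.le
          le_rfl hy).neg
        simpa using this
      · simp
      · rw [abs_of_pos (by linarith)] at hy
        exact tendsto_slope_increment μ ν hμmom hνmom horder hφ hr hK hlim hyt le_rfl hyt.le hy
    have hglob : ∀ x ∈ Ioo c d, ∀ y ∈ Ioo c d,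
        Tendsto (fun n => r n y - r n x) atTop (𝓝 0) := by
      intro x hx y hy
      refine isPreconnected_Ioo.induction₂
        (fun x y => Tendsto (fun n => r n y - r n x) atTop (𝓝 0)) hloc ?_ ?_ hx hy
      · intro x y z _ _ _ hxy hyz
        simpa using hyz.add hxy
      · intro x y _ _ hxy
        simpa using hxy.neg
    have hp : (c + d) / 2 ∈ Ioo c d := ⟨by linarith, by linarith⟩
    set p := (c + d) / 2
    refine ⟨fun n => r n p, fun n => φ n p - r n p * p, fun x hx => ?_⟩
    have hlim' : Tendsto (fun n => (r n x - r n p) * (x - p)) atTop (𝓝 0) := by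
      simpa using (hglob p hp x hx).mul_const (x - p)
    refine squeeze_zero (fun n => ?_) (fun n => ?_) hlim'
    · linarith [hr n p x]
    · linarith [hr n x p]
  · intro hseq x hx
    by_contra hcon
    have heq : ∫ y, |x - y| ∂ν = ∫ y, |x - y| ∂μ :=
      le_antisymm (not_lt.1 hcon) (horder _ (isConvexLipschitz_abs x))
    obtain ⟨m, q, hmq⟩ := hseq (fun _ y => |x - y|) (fun _ => isConvexLipschitz_abs x)
      (by simp [heq])
    obtain ⟨e, he, hec, hed⟩ : ∃ e > 0, c < x - e ∧ x + e < d := by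
      have h1 := hx.1
      have h2 := hx.2
      refine ⟨min (x - c) (d - x) / 2, ?_, ?_, ?_⟩
      · have : 0 < min (x - c) (d - x) := lt_min (by linarith) (by linarith)
        linarith
      · have := min_le_left (x - c) (d - x)
        linarith
      · have := min_le_right (x - c) (d - x)
        linarith
    have h1 := hmq (x - e) ⟨hec, by linarith [hx.2]⟩
    have h2 := hmq (x + e) ⟨by linarith [hx.1], hed⟩
    have h3 := hmq x hx
    -- the second difference kills the affine part and equals `2 e` on `|x - ·|`
    have h4 : Tendsto (fun _ : ℕ => 2 * e) atTop (𝓝 0) := by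
      have := (h1.add h2).sub (h3.const_mul 2)
      simp only [add_zero, mul_zero, sub_zero] at this
      refine this.congr fun n => ?_
      have e1 : |x - (x - e)| = e := by rw [sub_sub_cancel, abs_of_pos he]
      have e2 : |x - (x + e)| = e := by rw [sub_add_cancel_left, abs_neg, abs_of_pos he]
      rw [e1, e2, sub_self, abs_zero]
      ring
    have := tendsto_nhds_unique h4 tendsto_const_nhds
    linarith
end
end

section
/- Let μ be the uniform probability measure on the segment (0,1)×{0} ⊂ ℝ² (the image of Lebesgue measure on (0,1) under t ↦ (t,0)), and let ν = ½(ν₋ + ν₊), where ν₋ and ν₊ are the images of Lebesgue measure on (0,1) under t ↦ (t,−1) and t ↦ (t,1) respectively. Then the martingale coupling of (μ,ν) is unique: if γ is a Markov kernel from ℝ² to ℝ² such that ν(B) = ∫ γ(x,B) μ(dx) for every Borel set B and, for μ-a.e. x, γ(x,·) has finite first moment and barycenter x, then for μ-a.e. point (t,0), γ((t,0),·) = ½(δ_{(t,−1)} + δ_{(t,1)}). -/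
/-!
The coupling preserves the first coordinate because it preserves its second moment: both `μ` and
`ν` have the uniform law on `(0,1)` as first marginal, so the inequality
`x₁² ≤ ∫ y₁² dγ(x,·)` between `μ`-integrable functions (Jensen, from the barycenter condition)
is an equality after integrating against `μ`, hence an equality `μ`-a.e.  The variance of `y₁`
under `γ(x,·)` then vanishes, that is, `y₁ = x₁` almost surely.  Since `ν` is carried by the lines
`y₂ = ±1`, the measure `γ(x,·)` is carried by the two points `(x₁, ±1)`, and the second coordinate
of the barycenter being `0` forces the two weights to be equal.
-/

open MeasureTheory Set Filter Topology ENNReal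

noncomputable section

lemma integrable_of_ae_abs_le_one {m : Measure (ℝ × ℝ)} [IsProbabilityMeasure m]
    {f : ℝ × ℝ → ℝ} (hf : Measurable f) (hb : ∀ᵐ y ∂m, |f y| ≤ 1) : Integrable f m :=
  Integrable.of_bound hf.aestronglyMeasurable 1 (by simpa [Real.norm_eq_abs] using hb)

lemma integrable_fst_sq {m : Measure (ℝ × ℝ)} [IsProbabilityMeasure m]
    (hb : ∀ᵐ y ∂m, |y.1| ≤ 1) : Integrable (fun y => y.1 ^ 2) m :=
  integrable_of_ae_abs_le_one (by fun_prop) <| by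
    filter_upwards [hb] with y hy
    rw [abs_pow]
    exact pow_le_one₀ (abs_nonneg _) hy

/-- The variance of the first coordinate as second moment minus squared mean. -/
lemma integral_fst_sub_sq {m : Measure (ℝ × ℝ)} [IsProbabilityMeasure m]
    (hb : ∀ᵐ y ∂m, |y.1| ≤ 1) {a : ℝ} (ha : ∫ y, y.1 ∂m = a) :
    Integrable (fun y => (y.1 - a) ^ 2) m ∧
      ∫ y, (y.1 - a) ^ 2 ∂m = ∫ y, y.1 ^ 2 ∂m - a ^ 2 := by
  have h1 : Integrable (fun y => y.1) m := integrable_of_ae_abs_le_one measurable_fst hb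
  have h2 := integrable_fst_sq hb
  have e : (fun y : ℝ × ℝ => (y.1 - a) ^ 2) = fun y => (y.1 ^ 2 - (2 * a) * y.1) + a ^ 2 := by
    ext y; ring
  have h3 : Integrable (fun y : ℝ × ℝ => y.1 ^ 2 - (2 * a) * y.1) m := h2.sub (h1.const_mul _)
  rw [e]
  refine ⟨h3.add (integrable_const _), ?_⟩
  rw [integral_add h3 (integrable_const _), integral_sub h2 (h1.const_mul _),
    integral_const_mul, ha]
  simp
  ring

lemma lintegral_fst_sq {m : Measure (ℝ × ℝ)} [IsProbabilityMeasure m]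
    (hb : ∀ᵐ y ∂m, |y.1| ≤ 1) :
    ∫⁻ y, ENNReal.ofReal (y.1 ^ 2) ∂m = ENNReal.ofReal (∫ y, y.1 ^ 2 ∂m) :=
  (ofReal_integral_eq_lintegral_ofReal (integrable_fst_sq hb)
    (ae_of_all _ fun _ => sq_nonneg _)).symm

lemma sq_le_lintegral_fst_sq {m : Measure (ℝ × ℝ)} [IsProbabilityMeasure m]
    (hb : ∀ᵐ y ∂m, |y.1| ≤ 1) {a : ℝ} (ha : ∫ y, y.1 ∂m = a) :
    ENNReal.ofReal (a ^ 2) ≤ ∫⁻ y, ENNReal.ofReal (y.1 ^ 2) ∂m := by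
  rw [lintegral_fst_sq hb]
  apply ENNReal.ofReal_le_ofReal
  have h := (integral_fst_sub_sq hb ha).2
  have : 0 ≤ ∫ y, (y.1 - a) ^ 2 ∂m := integral_nonneg fun _ => sq_nonneg _
  linarith

/-- The equality case of Jensen's inequality for the square. -/
lemma ae_fst_eq_of_sq_eq {m : Measure (ℝ × ℝ)} [IsProbabilityMeasure m]
    (hb : ∀ᵐ y ∂m, |y.1| ≤ 1) {a : ℝ} (ha : ∫ y, y.1 ∂m = a)
    (he : ENNReal.ofReal (a ^ 2) = ∫⁻ y, ENNReal.ofReal (y.1 ^ 2) ∂m) :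
    ∀ᵐ y ∂m, y.1 = a := by
  rw [lintegral_fst_sq hb, ENNReal.ofReal_eq_ofReal_iff (sq_nonneg _)
    (integral_nonneg fun _ => sq_nonneg _)] at he
  obtain ⟨hi, h⟩ := integral_fst_sub_sq hb ha
  rw [← he, sub_self, integral_eq_zero_iff_of_nonneg (fun _ => sq_nonneg _) hi] at h
  filter_upwards [h] with y hy
  exact sub_eq_zero.1 (pow_eq_zero_iff two_ne_zero |>.1 hy)

lemma eq_half_dirac {m : Measure (ℝ × ℝ)} [IsProbabilityMeasure m] {a : ℝ}
    (h1 : ∀ᵐ y ∂m, y.1 = a) (h2 : ∀ᵐ y ∂m, y.2 = -1 ∨ y.2 = 1) (h0 : ∫ y, y.2 ∂m = 0) :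
    m = (1/2 : ℝ≥0∞) • (Measure.dirac (a, (-1:ℝ)) + Measure.dirac (a, (1:ℝ))) := by
  have hm : m = m {(a, (-1:ℝ))} • Measure.dirac (a, (-1:ℝ))
      + m {(a, (1:ℝ))} • Measure.dirac (a, (1:ℝ)) := by
    rw [← Measure.restrict_singleton, ← Measure.restrict_singleton,
      ← Measure.restrict_union (by norm_num) (measurableSet_singleton _)]
    symm
    apply Measure.restrict_eq_self_of_ae_mem
    filter_upwards [h1, h2] with y hy1 hy2
    rcases hy2 with hy2 | hy2
    · left; exact Prod.ext hy1 hy2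
    · right; exact Prod.ext hy1 hy2
  set p := m {(a, (-1:ℝ))} with hp
  set q := m {(a, (1:ℝ))} with hq
  have hpt : p ≠ ∞ := measure_ne_top _ _
  have hqt : q ≠ ∞ := measure_ne_top _ _
  have hpq : p + q = 1 := by
    have := measure_univ (μ := m)
    rw [hm] at this
    simpa using this
  have hd : p = q := by
    rw [hm, integral_add_measure ((integrable_dirac (by simp)).smul_measure hpt)
      ((integrable_dirac (by simp)).smul_measure hqt)] at h0
    simp only [integral_smul_measure, integral_dirac, smul_eq_mul] at h0
    rw [← ENNReal.toReal_eq_toReal_iff' hpt hqt]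
    linarith
  have hq2 : q = 1/2 := by
    rw [hd, ← two_mul] at hpq
    rw [one_div]
    exact ENNReal.eq_inv_of_mul_eq_one_left (by rwa [mul_comm])
  rw [hm, hd, hq2, smul_add]

/-- For `μ` uniform on `(0,1)×{0}` and `ν` uniform on `(0,1)×{-1,1}`, the martingale
coupling is unique: `μ`-a.e., `γ((t,0),·) = ½(δ_{(t,-1)} + δ_{(t,1)})`. -/
theorem stmt17 (μ ν : Measure (ℝ × ℝ))
    (hμ : μ = Measure.map (fun t : ℝ => (t, (0:ℝ))) (volume.restrict (Set.Ioo (0:ℝ) 1)))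
    (hν : ν = (1/2 : ℝ≥0∞) •
      (Measure.map (fun t : ℝ => (t, (-1:ℝ))) (volume.restrict (Set.Ioo (0:ℝ) 1))
        + Measure.map (fun t : ℝ => (t, (1:ℝ))) (volume.restrict (Set.Ioo (0:ℝ) 1))))
    (γ : ProbabilityTheory.Kernel (ℝ × ℝ) (ℝ × ℝ)) [ProbabilityTheory.IsMarkovKernel γ]
    (hdisint : ∀ B : Set (ℝ × ℝ), MeasurableSet B → ν B = ∫⁻ x, γ x B ∂μ)
    (hbar : ∀ᵐ x ∂μ, Integrable (fun y => ‖y‖) (γ x) ∧ ∫ y, y ∂(γ x) = x) :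
    ∀ᵐ x ∂μ, γ x = (1/2 : ℝ≥0∞) •
      (Measure.dirac (x.1, (-1:ℝ)) + Measure.dirac (x.1, (1:ℝ))) := by
  have hbind : ν = μ.bind γ := by
    ext B hB
    rw [hdisint B hB, Measure.bind_apply hB γ.measurable.aemeasurable]
  have hm : ∀ c : ℝ, Measurable fun t : ℝ => (t, c) := fun c => by fun_prop
  have hIoo : ∀ᵐ t ∂(volume.restrict (Set.Ioo (0:ℝ) 1)), t ∈ Set.Ioo (0:ℝ) 1 :=
    ae_restrict_mem measurableSet_Ioo
  have hμ0 : ∀ᵐ x ∂μ, x.2 = 0 := by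
    rw [hμ, ae_map_iff (hm 0).aemeasurable (measurableSet_eq_fun measurable_snd measurable_const)]
    exact ae_of_all _ fun _ => rfl
  set S : Set (ℝ × ℝ) := {y | |y.1| ≤ 1 ∧ (y.2 = -1 ∨ y.2 = 1)} with hS
  have hSm : MeasurableSet S := by
    refine (measurableSet_le (continuous_abs.measurable.comp measurable_fst) measurable_const).inter ?_
    exact (measurableSet_eq_fun measurable_snd measurable_const).union
      (measurableSet_eq_fun measurable_snd measurable_const)
  have hνS : ∀ᵐ y ∂ν, y ∈ S := by
    rw [hν]
    refine Measure.ae_smul_measure (ae_add_measure_iff.2 ⟨?_, ?_⟩) _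
    all_goals
      refine (ae_map_iff (hm _).aemeasurable hSm).2 ?_
      filter_upwards [hIoo] with t ht
      refine ⟨abs_le.2 ⟨by linarith [ht.1], ht.2.le⟩, by simp⟩
  have hγS : ∀ᵐ x ∂μ, ∀ᵐ y ∂(γ x), y ∈ S := by
    rw [hbind] at hνS
    exact Measure.ae_ae_of_ae_bind γ.measurable.aemeasurable hνS
  have hcoord : ∀ᵐ x ∂μ, ∫ y, y.1 ∂(γ x) = x.1 ∧ ∫ y, y.2 ∂(γ x) = x.2 := by
    filter_upwards [hbar] with x hx
    have hi : Integrable (fun y : ℝ × ℝ => y) (γ x) :=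
      (integrable_norm_iff measurable_id.aestronglyMeasurable).1 hx.1
    exact ⟨by rw [← fst_integral hi, hx.2], by rw [← snd_integral hi, hx.2]⟩
  have hsq : Measurable fun y : ℝ × ℝ => ENNReal.ofReal (y.1 ^ 2) := by fun_prop
  have hle : ∀ᵐ x ∂μ, ENNReal.ofReal (x.1 ^ 2) ≤ ∫⁻ y, ENNReal.ofReal (y.1 ^ 2) ∂(γ x) := by
    filter_upwards [hγS, hcoord] with x hx hc
    exact sq_le_lintegral_fst_sq (hx.mono fun y hy => hy.1) hc.1
  -- `μ` and `ν` have the same first marginal, hence equal second moments of the first coordinate;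
  -- the left-hand side is this moment of `ν`.
  have hmom : ∫⁻ x, ∫⁻ y, ENNReal.ofReal (y.1 ^ 2) ∂(γ x) ∂μ
      = ∫⁻ x, ENNReal.ofReal (x.1 ^ 2) ∂μ := by
    rw [← Measure.lintegral_bind γ.measurable.aemeasurable hsq.aemeasurable, ← hbind, hν, hμ,
      lintegral_smul_measure, lintegral_add_measure, lintegral_map hsq (hm _),
      lintegral_map hsq (hm _), lintegral_map hsq (hm _), ← two_mul, smul_eq_mul, ← mul_assoc,
      one_div, ENNReal.inv_mul_cancel two_ne_zero ofNat_ne_top, one_mul]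
  have hfin : ∫⁻ x, ENNReal.ofReal (x.1 ^ 2) ∂μ ≠ ∞ := by
    rw [hμ, lintegral_map hsq (hm _)]
    refine ne_top_of_le_ne_top one_ne_top ?_
    calc _ ≤ ∫⁻ _ in Set.Ioo (0:ℝ) 1, 1 := by
          refine lintegral_mono_ae ?_
          filter_upwards [hIoo] with t ht
          rw [ENNReal.ofReal_le_one]
          exact pow_le_one₀ ht.1.le ht.2.le
      _ ≤ 1 := by simp
  have heq := ae_eq_of_ae_le_of_lintegral_le hle hfin hsq.lintegral_kernel.aemeasurable hmom.le
  filter_upwards [hγS, hcoord, heq, hμ0] with x hx hc he h0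
  exact eq_half_dirac (ae_fst_eq_of_sq_eq (hx.mono fun y hy => hy.1) hc.1 he)
    (hx.mono fun y hy => hy.2) (hc.2.trans h0)
end
end
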